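/- arXiv:math/0104241 — 4 statements merged into one kernel-verified Lean document; each statement's English description precedes it below -/
import Mathlib

section
/- Let a,b be positive integers and let y : ℕ → ℚ(y₀,y₁,y₂) satisfy y(k) = (y(k-2)^a · y(k-1)^b + 1)/y(k-3) for k ≥ 3, with y(0),y(1),y(2) being indeterminates. Then every y(k) is a Laurent polynomial in y₀, y₁, y₂ with integer coefficients. -/
open MvPolynomial

/-!
Consider seven consecutive terms `u, v, w, m, n, o, t` of a solution, the first six of which lie in
a ring `A`. Modulo `m`, the relations for `n * v` and `o * w` say that `n` and `o` are inverse to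
`v` and `w`, while the relation for `m * u` says that `v ^ a * w ^ b = -1`. Inverting the latter
gives `n ^ a * o ^ b = -1`, so `m` divides the numerator of `t`, and `t` lies in `A` too. The only
input besides this is that no term vanishes: every term is a quotient of polynomials which are
positive at `(1, 1, 1)`, and such quotients are closed under addition, multiplication and inversion.
-/

section Divisibility

variable {R : Type*} [CommRing R] {a b : ℕ}

theorem dvd_pow_mul_pow_add_one_of_dvd_mul_sub_one {m v w v' w' : R}
    (hv : m ∣ v' * v - 1) (hw : m ∣ w' * w - 1) (h : m ∣ v ^ a * w ^ b + 1) :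
    m ∣ v' ^ a * w' ^ b + 1 := by
  have hva : m ∣ (v' * v) ^ a - 1 := by
    simpa only [one_pow] using hv.trans (sub_dvd_pow_sub_pow (v' * v) 1 a)
  have hwb : m ∣ (w' * w) ^ b - 1 := by
    simpa only [one_pow] using hw.trans (sub_dvd_pow_sub_pow (w' * w) 1 b)
  have key : v' ^ a * w' ^ b + 1 = v' ^ a * w' ^ b * (v ^ a * w ^ b + 1)
      - ((v' * v) ^ a - 1) * (w' * w) ^ b - ((w' * w) ^ b - 1) := by ring
  rw [key]
  exact ((h.mul_left _).sub (hva.mul_right _)).sub hwb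

theorem dvd_pow_mul_pow_add_one_of_mul_eq (ha : a ≠ 0) (hb : b ≠ 0) {u v w m n o : R}
    (hm : m * u = v ^ a * w ^ b + 1) (hn : n * v = w ^ a * m ^ b + 1)
    (ho : o * w = m ^ a * n ^ b + 1) : m ∣ n ^ a * o ^ b + 1 := by
  apply dvd_pow_mul_pow_add_one_of_dvd_mul_sub_one (v := v) (w := w)
  · rw [hn, add_sub_cancel_right]
    exact (dvd_pow_self m hb).mul_left _
  · rw [ho, add_sub_cancel_right]
    exact (dvd_pow_self m ha).mul_right _
  · exact Dvd.intro u hm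

end Divisibility

section PositiveFractions

theorem algebraMap_ne_zero_of_map_ne_zero {R S K : Type*} [CommSemiring R] [Semiring S]
    [Semiring K] [Algebra R K] [FaithfulSMul R K] {φ : R →+* S} {p : R} (hp : φ p ≠ 0) :
    algebraMap R K p ≠ 0 := by
  rw [Ne, FaithfulSMul.algebraMap_eq_zero_iff R K]
  rintro rfl
  exact hp (map_zero φ)

variable {R S : Type*} [CommSemiring R] [Semiring S] [PartialOrder S] [IsStrictOrderedRing S]
  (φ : R →+* S) (K : Type*) [Field K] [Algebra R K]

/-- The quotients in `K` of elements of `R` that are positive under `φ`. For `φ` the evaluation at a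
point, they generalise subtraction-free rational expressions, and as those they are never `0`. -/
def positiveFractions : Submonoid K where
  carrier := {z | ∃ p q : R, 0 < φ p ∧ 0 < φ q ∧ z = algebraMap R K p / algebraMap R K q}
  one_mem' := ⟨1, 1, by simp, by simp, by simp⟩
  mul_mem' := by
    rintro _ _ ⟨p, q, hp, hq, rfl⟩ ⟨p', q', hp', hq', rfl⟩
    refine ⟨p * p', q * q', ?_, ?_, ?_⟩
    · simpa only [map_mul] using mul_pos hp hp'
    · simpa only [map_mul] using mul_pos hq hq'
    · simp only [map_mul, div_mul_div_comm]

namespace positiveFractions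

variable {φ K} {z w : K}

theorem algebraMap_mem {p : R} (hp : 0 < φ p) : algebraMap R K p ∈ positiveFractions φ K :=
  ⟨p, 1, hp, by simp, by simp⟩

theorem inv_mem (hz : z ∈ positiveFractions φ K) : z⁻¹ ∈ positiveFractions φ K := by
  obtain ⟨p, q, hp, hq, rfl⟩ := hz
  exact ⟨q, p, hq, hp, inv_div _ _⟩

variable [FaithfulSMul R K]

theorem ne_zero (hz : z ∈ positiveFractions φ K) : z ≠ 0 := by
  obtain ⟨p, q, hp, hq, rfl⟩ := hz
  exact div_ne_zero (algebraMap_ne_zero_of_map_ne_zero hp.ne')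
    (algebraMap_ne_zero_of_map_ne_zero hq.ne')

theorem add_mem (hz : z ∈ positiveFractions φ K) (hw : w ∈ positiveFractions φ K) :
    z + w ∈ positiveFractions φ K := by
  obtain ⟨p, q, hp, hq, rfl⟩ := hz
  obtain ⟨p', q', hp', hq', rfl⟩ := hw
  have hq₀ : algebraMap R K q ≠ 0 := algebraMap_ne_zero_of_map_ne_zero hq.ne'
  have hq₀' : algebraMap R K q' ≠ 0 := algebraMap_ne_zero_of_map_ne_zero hq'.ne'
  refine ⟨p * q' + q * p', q * q', ?_, ?_, ?_⟩
  · simpa only [map_add, map_mul] using add_pos (mul_pos hp hq') (mul_pos hq hp')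
  · simpa only [map_mul] using mul_pos hq hq'
  · simp only [map_add, map_mul, div_add_div _ _ hq₀ hq₀']

theorem mem_of_recurrence {a b : ℕ} {y : ℕ → K}
    (hrec : ∀ k, y (k + 3) = (y (k + 1) ^ a * y (k + 2) ^ b + 1) / y k)
    (hinit : ∀ i < 3, y i ∈ positiveFractions φ K) (k : ℕ) : y k ∈ positiveFractions φ K := by
  induction k using Nat.strong_induction_on with
  | _ k ih =>
    obtain hk | ⟨j, rfl⟩ := (lt_or_ge k 3).imp_right Nat.exists_eq_add_of_le'
    · exact hinit k hk
    · rw [hrec, div_eq_mul_inv]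
      exact mul_mem (add_mem (mul_mem (pow_mem (ih (j + 1) (by lia)) a)
        (pow_mem (ih (j + 2) (by lia)) b)) (one_mem _)) (inv_mem (ih j (by lia)))

end positiveFractions

end PositiveFractions

section Recurrence

variable {K : Type*} [Field K] {a b : ℕ} {y : ℕ → K}

theorem mem_add_six_of_recurrence {S : Type*} [SetLike S K] [SubringClass S K] {A : S}
    (ha : a ≠ 0) (hb : b ≠ 0) (hy : ∀ k, y k ≠ 0)
    (hrec : ∀ k, y (k + 3) = (y (k + 1) ^ a * y (k + 2) ^ b + 1) / y k)
    {k : ℕ} (hA : ∀ i < 6, y (k + i) ∈ A) : y (k + 6) ∈ A := by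
  have hmul (j : ℕ) : y (j + 3) * y j = y (j + 1) ^ a * y (j + 2) ^ b + 1 := by
    rw [hrec, div_mul_cancel₀ _ (hy j)]
  let z (i : Fin 6) : A := ⟨y (k + i), hA i i.isLt⟩
  obtain ⟨c, hc⟩ : z 3 ∣ z 4 ^ a * z 5 ^ b + 1 :=
    dvd_pow_mul_pow_add_one_of_mul_eq ha hb (u := z 0) (v := z 1) (w := z 2)
      (Subtype.ext (hmul k)) (Subtype.ext (hmul (k + 1))) (Subtype.ext (hmul (k + 2)))
  have hc' : y (k + 4) ^ a * y (k + 5) ^ b + 1 = y (k + 3) * c := congrArg Subtype.val hc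
  have hyc : y (k + 6) = c := by
    rw [hrec (k + 3), hc', mul_div_cancel_left₀ _ (hy (k + 3))]
  exact hyc ▸ c.2

theorem mem_of_recurrence {S : Type*} [SetLike S K] [SubringClass S K] {A : S}
    (ha : a ≠ 0) (hb : b ≠ 0) (hy : ∀ k, y k ≠ 0)
    (hrec : ∀ k, y (k + 3) = (y (k + 1) ^ a * y (k + 2) ^ b + 1) / y k)
    (hinit : ∀ i < 3, y i ∈ A) (hinv : ∀ i < 3, (y i)⁻¹ ∈ A) (k : ℕ) : y k ∈ A := by
  induction k using Nat.strong_induction_on with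
  | _ k ih =>
    obtain hk | ⟨j, rfl⟩ := (lt_or_ge k 3).imp_right Nat.exists_eq_add_of_le'
    · exact hinit k hk
    obtain hj | ⟨i, rfl⟩ := (lt_or_ge j 3).imp_right Nat.exists_eq_add_of_le'
    · rw [hrec, div_eq_mul_inv]
      exact mul_mem (add_mem (mul_mem (pow_mem (ih (j + 1) (by lia)) a)
        (pow_mem (ih (j + 2) (by lia)) b)) (one_mem A)) (hinv j hj)
    · exact mem_add_six_of_recurrence ha hb hy hrec fun l hl ↦ ih (i + l) (by lia)

theorem somos3_like_laurent_general (ha : 0 < a) (hb : 0 < b) {x : Fin 3 → K}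
    (hy : ∀ k, y k ≠ 0) (hinit : ∀ i : Fin 3, y i = x i)
    (hrec : ∀ k, y (k + 3) = (y (k + 1) ^ a * y (k + 2) ^ b + 1) / y k) (k : ℕ) :
    y k ∈ Algebra.adjoin ℤ (Set.range x ∪ Set.range (fun i => (x i)⁻¹)) := by
  refine mem_of_recurrence ha.ne' hb.ne' hy hrec (fun i hi ↦ ?_) (fun i hi ↦ ?_) k
  · exact Algebra.subset_adjoin (.inl ⟨⟨i, hi⟩, (hinit ⟨i, hi⟩).symm⟩)
  · exact Algebra.subset_adjoin (.inr ⟨⟨i, hi⟩, congrArg (·⁻¹) (hinit ⟨i, hi⟩).symm⟩)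

theorem ne_zero_of_recurrence {σ : Type*} [Algebra (MvPolynomial σ ℤ) K]
    [FaithfulSMul (MvPolynomial σ ℤ) K]
    (hrec : ∀ k, y (k + 3) = (y (k + 1) ^ a * y (k + 2) ^ b + 1) / y k)
    (hinit : ∀ i < 3, ∃ s : σ, y i = algebraMap (MvPolynomial σ ℤ) K (X s)) (k : ℕ) :
    y k ≠ 0 := by
  refine positiveFractions.ne_zero (φ := eval fun _ : σ ↦ (1 : ℤ))
    (positiveFractions.mem_of_recurrence hrec (fun i hi ↦ ?_) k)
  obtain ⟨s, hs⟩ := hinit i hi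
  exact hs ▸ positiveFractions.algebraMap_mem (by simp)

end Recurrence

/-- The recurrence y_k y_{k-3} = y_{k-2}^a y_{k-1}^b + 1 exhibits the
Laurent phenomenon. -/
theorem somos3_like_laurent
    (a b : ℕ) (ha : 0 < a) (hb : 0 < b)
    (F : Type*) [Field F] [Algebra (MvPolynomial (Fin 3) ℤ) F]
    [IsFractionRing (MvPolynomial (Fin 3) ℤ) F]
    (x : Fin 3 → F) (hx : ∀ i, x i = algebraMap (MvPolynomial (Fin 3) ℤ) F (X i))
    (y : ℕ → F)
    (hinit : ∀ i : Fin 3, y i = x i)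
    (hrec : ∀ k : ℕ, y (k + 3) = (y (k + 1) ^ a * y (k + 2) ^ b + 1) / y k) :
    ∀ k : ℕ, y k ∈ Algebra.adjoin ℤ
      (Set.range x ∪ Set.range (fun i => (x i)⁻¹)) := by
  have hX : ∀ i < 3, ∃ j, y i = algebraMap (MvPolynomial (Fin 3) ℤ) F (X j) := fun i hi ↦
    ⟨⟨i, hi⟩, (hinit ⟨i, hi⟩).trans (hx ⟨i, hi⟩)⟩
  exact somos3_like_laurent_general ha hb (ne_zero_of_recurrence hrec hX) hinit hrec
end

section
/- Let p < q ≤ n/2 be positive integers, let α, β be indeterminates, and let y : ℕ → F, where F is the field of rational functions over ℤ[α,β] in indeterminates y₀,…,y_{n-1}, be defined by y(i) = yᵢ for i < n and y(k+n) = (α·y(k+p)·y(k+n−p) + β·y(k+q)·y(k+n−q))/y(k). Then every y(m) is a Laurent polynomial in y₀,…,y_{n−1} with coefficients in ℤ[α,β]. -/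
open MvPolynomial

/-!
Let `c` be the Gale–Robinson sequence whose seed consists of indeterminates. Its term of index
`k + n` is a Laurent polynomial exactly when `α c_{k+p} c_{k+n-p} + β c_{k+q} c_{k+n-q}` is
divisible by `c k` in the Laurent polynomial ring. For `k < n` the divisor is a unit, and for
`k = n` the divisibility follows from the recurrence modulo `c n`. For `k > n`, the induction
hypothesis applied to the windows `c 1, …, c n` and `c (n + 1), …, c (2 * n)` shows that the
divisibility holds after multiplying by a power of `c n`, and also after multiplying by a monomial
in `c (n + 1), …, c (2 * n)`. Since `c n` is prime and divides none of these later terms, it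
already holds without a multiplier.

That `c n` divides no later term, and that no term vanishes, is read off a single specialization:
for suitable `α, β ∈ ℚ` the recurrence is solved by the arithmetic progression `X + (j - n)` in
`ℚ⟦X⟧`, all of whose terms are nonzero and whose only nonunit is the term `j = n`. Finally, every
nowhere vanishing Gale–Robinson sequence in a field is a specialization of `c`.
-/

namespace GaleRobinson

section Algebra

theorem dvd_of_dvd_mul_prime_pow_of_dvd_mul {R : Type*} [CommMonoidWithZero R] [IsCancelMulZero R]
    {π a x d : R} (hπ : Prime π) {e : ℕ} (hd : ¬π ∣ d) (hxπ : a ∣ x * π ^ e) (hxd : a ∣ x * d) :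
    a ∣ x := by
  obtain ⟨r, hr⟩ := hxπ
  obtain ⟨s, hs⟩ := hxd
  have hπe : π ^ e ≠ 0 := pow_ne_zero e hπ.ne_zero
  rcases eq_or_ne a 0 with rfl | ha
  · rw [zero_mul, mul_eq_zero_iff_right hπe] at hr
    exact hr ▸ dvd_rfl
  · have hrd : r * d = π ^ e * s := mul_left_cancel₀ ha <|
      calc a * (r * d) = x * d * π ^ e := by rw [← mul_assoc, ← hr, mul_right_comm]
        _ = a * (π ^ e * s) := by rw [hs, mul_assoc, mul_comm s]
    obtain ⟨t, rfl⟩ := hπ.pow_dvd_of_dvd_mul_right e hd ⟨s, hrd⟩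
    refine ⟨t, mul_right_cancel₀ hπe ?_⟩
    rw [hr, mul_assoc, mul_comm t]

theorem isRelPrime_X {σ R : Type*} [CommRing R] [IsDomain R] {i j : σ} (h : i ≠ j) :
    IsRelPrime (X i : MvPolynomial σ R) (X j) :=
  (X_prime (R := R)).irreducible.isRelPrime_iff_not_dvd.2 (mt X_dvd_X.1 h)

theorem prime_X_mul_X_mul_X_add {σ R : Type*} [CommRing R] [IsDomain R]
    [UniqueFactorizationMonoid R] {a u v b s t : σ} (hau : a ≠ u) (hav : a ≠ v)
    (h : Disjoint ({a, u, v} : Set σ) {b, s, t}) :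
    Prime (X a * X u * X v + X b * X s * X t : MvPolynomial σ R) := by
  classical
  simp only [Set.disjoint_insert_left, Set.disjoint_singleton_left, Set.mem_insert_iff,
    Set.mem_singleton_iff, not_or] at h
  obtain ⟨⟨hab, has, hat⟩, ⟨hub, hus, hut⟩, hvb, hvs, hvt⟩ := h
  rw [← UniqueFactorizationMonoid.irreducible_iff_prime, mul_assoc (X a), mul_comm (X a)]
  refine irreducible_mul_X_add _ _ a (mul_ne_zero (X_ne_zero u) (X_ne_zero v)) ?_ ?_ ?_
  · intro ha
    simpa [vars_X, hau, hav] using vars_mul _ _ ha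
  · intro ha
    simpa [vars_X, hab, has, hat] using
      (vars_mul _ _).trans (Finset.union_subset_union_left (vars_mul _ _)) ha
  · simp only [IsRelPrime.mul_left_iff, IsRelPrime.mul_right_iff]
    exact ⟨⟨⟨isRelPrime_X hub, isRelPrime_X hvb⟩, isRelPrime_X hus, isRelPrime_X hvs⟩,
      isRelPrime_X hut, isRelPrime_X hvt⟩

theorem aeval_mem_adjoin_range {σ R A : Type*} [CommRing R] [CommRing A] [Algebra R A] (w : σ → A)
    (r : MvPolynomial σ R) : aeval w r ∈ Algebra.adjoin R (Set.range w) :=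
  Algebra.adjoin_range_eq_range_aeval R w ▸ AlgHom.mem_range_self (aeval w) r

theorem exists_add_eq_one_and_mul_add_mul_eq_zero {K : Type*} [Field K] {p q n : K} (hpq : p ≠ q)
    (hn : n ≠ p + q) :
    ∃ a b : K, a + b = 1 ∧ a * (p * (n - p)) + b * (q * (n - q)) = 0 := by
  have hpq' : q - p ≠ 0 := sub_ne_zero.2 hpq.symm
  have hn' : n - (p + q) ≠ 0 := sub_ne_zero.2 hn
  refine ⟨q * (n - q) / ((q - p) * (n - (p + q))), -(p * (n - p)) / ((q - p) * (n - (p + q))),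
    ?_, ?_⟩ <;> field_simp <;> ring

end Algebra

section Recurrence

variable {n p q M : ℕ} {R S : Type*} [CommRing R] [CommRing S]

/-- The right-hand side of the `k`-th Gale–Robinson relation. The seed `w` lists the initial terms
`y₀, …, y_{n-1}` at `Sum.inl` and the parameters `α`, `β` at `Sum.inr 0`, `Sum.inr 1`. -/
def exchange (p q : ℕ) (w : Fin n ⊕ Fin 2 → R) (y : ℕ → R) (k : ℕ) : R :=
  w (Sum.inr 0) * y (k + p) * y (k + (n - p)) + w (Sum.inr 1) * y (k + q) * y (k + (n - q))

/-- The terms `y 0, …, y (M - 1)` form an initial segment of a Gale–Robinson sequence with seed `w`;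
the terms from `y M` on are only constrained by the seed. -/
structure IsGaleRobinsonBelow (p q M : ℕ) (w : Fin n ⊕ Fin 2 → R) (y : ℕ → R) : Prop where
  init : ∀ i : Fin n, y i = w (Sum.inl i)
  relation : ∀ k, k + n < M → y (k + n) * y k = exchange p q w y k

theorem exchange_congr (hp : 0 < p) (hpn : p < n) (hq : 0 < q) (hqn : q < n)
    (w : Fin n ⊕ Fin 2 → R) {y z : ℕ → R} {k : ℕ} (h : ∀ j < k + n, y j = z j) :
    exchange p q w y k = exchange p q w z k := by
  simp only [exchange, h (k + p) (by lia), h (k + (n - p)) (by lia), h (k + q) (by lia),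
    h (k + (n - q)) (by lia)]

theorem exchange_shift (v : Fin n → R) (w : Fin n ⊕ Fin 2 → R) (y : ℕ → R) (s k : ℕ) :
    exchange p q (Sum.elim v (w ∘ Sum.inr)) (fun j => y (j + s)) k = exchange p q w y (k + s) := by
  simp [exchange, Nat.add_right_comm _ s]

theorem map_exchange (f : R →+* S) (w : Fin n ⊕ Fin 2 → R) (y : ℕ → R) (k : ℕ) :
    f (exchange p q w y k) = exchange p q (f ∘ w) (f ∘ y) k := by
  simp [exchange]

theorem IsGaleRobinsonBelow.mono {M N : ℕ} (hMN : M ≤ N) {w : Fin n ⊕ Fin 2 → R} {y : ℕ → R}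
    (h : IsGaleRobinsonBelow p q N w y) : IsGaleRobinsonBelow p q M w y where
  init := h.init
  relation k hk := h.relation k (hk.trans_le hMN)

theorem IsGaleRobinsonBelow.map (f : R →+* S) {w : Fin n ⊕ Fin 2 → R} {y : ℕ → R}
    (h : IsGaleRobinsonBelow p q M w y) : IsGaleRobinsonBelow p q M (f ∘ w) (f ∘ y) where
  init i := congrArg f (h.init i)
  relation k hk := by simpa [map_exchange] using congrArg f (h.relation k hk)

theorem IsGaleRobinsonBelow.shift {w : Fin n ⊕ Fin 2 → R} {y : ℕ → R} {s : ℕ}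
    (h : IsGaleRobinsonBelow p q (M + s) w y) :
    IsGaleRobinsonBelow p q M (Sum.elim (fun i : Fin n => y (i + s)) (w ∘ Sum.inr))
      (fun j => y (j + s)) where
  init _ := rfl
  relation k hk := by
    rw [exchange_shift, Nat.add_right_comm]
    exact h.relation (k + s) (by lia)

theorem IsGaleRobinsonBelow.eqOn [IsDomain R] (hp : 0 < p) (hpn : p < n) (hq : 0 < q) (hqn : q < n)
    {w : Fin n ⊕ Fin 2 → R} {y z : ℕ → R} (hy : IsGaleRobinsonBelow p q M w y)
    (hz : IsGaleRobinsonBelow p q M w z) (hne : ∀ k, k + n < M → z k ≠ 0) :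
    ∀ j < M, y j = z j := by
  intro j hj
  induction j using Nat.strong_induction_on with
  | _ j ih =>
  rcases lt_or_ge j n with hjn | hjn
  · exact (hy.init ⟨j, hjn⟩).trans (hz.init ⟨j, hjn⟩).symm
  · obtain ⟨k, rfl⟩ := Nat.exists_eq_add_of_le' hjn
    have hyz : ∀ i < k + n, y i = z i := fun i hi => ih i hi (by lia)
    apply mul_right_cancel₀ (hne k hj)
    calc y (k + n) * z k = y (k + n) * y k := by rw [hyz k (by lia)]
      _ = exchange p q w y k := hy.relation k hj
      _ = exchange p q w z k := exchange_congr hp hpn hq hqn w hyz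
      _ = z (k + n) * z k := (hz.relation k hj).symm

theorem isGaleRobinsonBelow_arithmeticProgression (hpn : p ≤ n) (hqn : q ≤ n) {a b : R}
    (hab : a + b = 1) (h : a * (p * (n - p)) + b * (q * (n - q)) = 0) (t : R) :
    IsGaleRobinsonBelow p q M (Sum.elim (fun i : Fin n => t + (i : ℕ)) ![a, b])
      (fun j => t + j) where
  init _ := rfl
  relation k _ := by
    simp only [exchange, Sum.elim_inr, Matrix.cons_val_zero, Matrix.cons_val_one]
    push_cast [Nat.cast_sub hpn, Nat.cast_sub hqn]
    linear_combination (-(t + k) * (t + k + n)) * hab - h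

-- With `y n = 0`, clearing the denominators `y p`, `y (n - p)`, `y q`, `y (n - q)` turns both
-- summands of `exchange p q w y n` into multiples of one product of four terms, whose cofactors add
-- up to a multiple of `exchange p q w y 0 = y n * y 0 = 0`.
theorem IsGaleRobinsonBelow.exchange_order_eq_zero (hp : 0 < p) (hpn : p < n) (hq : 0 < q)
    (hqn : q < n) {w : Fin n ⊕ Fin 2 → R} {y : ℕ → R} (h : IsGaleRobinsonBelow p q (2 * n) w y)
    (hu : ∀ i < n, IsUnit (y i)) (hyn : y n = 0) : exchange p q w y n = 0 := by
  have rel_zero := h.relation 0 (by lia)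
  have rel_p := h.relation p (by lia)
  have rel_np := h.relation (n - p) (by lia)
  have rel_q := h.relation q (by lia)
  have rel_nq := h.relation (n - q) (by lia)
  simp only [exchange, zero_add, add_comm n, Nat.add_sub_cancel' hpn.le,
    Nat.add_sub_cancel' hqn.le, Nat.sub_add_cancel hpn.le, Nat.sub_add_cancel hqn.le,
    add_comm q p, add_comm (n - q) (n - p), add_comm p (n - q), add_comm q (n - p), hyn]
    at rel_zero rel_p rel_np rel_q rel_nq ⊢
  set a := w (Sum.inr 0)
  set b := w (Sum.inr 1)
  have hunit : IsUnit (y p * y (n - p) * (y q * y (n - q))) :=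
    ((hu _ (by lia)).mul (hu _ (by lia))).mul ((hu _ (by lia)).mul (hu _ (by lia)))
  rw [← hunit.mul_left_eq_zero]
  have key_p : y (p + n) * y p * (y (n - p + n) * y (n - p)) =
      b ^ 2 * (y (p + q) * y (n - q + p) * y (n - p + q) * y (n - p + (n - q))) := by
    rw [rel_p, rel_np]
    ring
  have key_q : y (q + n) * y q * (y (n - q + n) * y (n - q)) =
      a ^ 2 * (y (p + q) * y (n - q + p) * y (n - p + q) * y (n - p + (n - q))) := by
    rw [rel_q, rel_nq]
    ring
  linear_combination a * (y q * y (n - q)) * key_p + b * (y p * y (n - p)) * key_q -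
    a * b * (y (p + q) * y (n - q + p) * y (n - p + q) * y (n - p + (n - q))) * rel_zero

theorem IsGaleRobinsonBelow.dvd_exchange_order (hp : 0 < p) (hpn : p < n) (hq : 0 < q) (hqn : q < n)
    {w : Fin n ⊕ Fin 2 → R} {y : ℕ → R} (h : IsGaleRobinsonBelow p q (2 * n) w y)
    (hu : ∀ i < n, IsUnit (y i)) : y n ∣ exchange p q w y n := by
  let π := Ideal.Quotient.mk (Ideal.span {y n})
  rw [← Ideal.Quotient.eq_zero_iff_dvd, map_exchange]
  exact (h.map π).exchange_order_eq_zero hp hpn hq hqn (fun i hi => (hu i hi).map π)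
    ((Ideal.Quotient.eq_zero_iff_dvd _ _).2 dvd_rfl)

end Recurrence

section LaurentRing

variable {n : ℕ}

/-- The product of the initial terms, whose inversion turns polynomials into Laurent polynomials. -/
noncomputable def initialMonomial (n : ℕ) : MvPolynomial (Fin n ⊕ Fin 2) ℤ :=
  ∏ i : Fin n, X (Sum.inl i)

/-- The ring of Laurent polynomials in `y₀, …, y_{n-1}` over `ℤ[α, β]`, as the localization of the
polynomial ring away from the product of the `yᵢ`. -/
abbrev LaurentRing (n : ℕ) : Type :=
  Localization.Away (initialMonomial n)

theorem initialMonomial_ne_zero : initialMonomial n ≠ 0 :=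
  Finset.prod_ne_zero_iff.2 fun _ _ => X_ne_zero _

instance : IsDomain (LaurentRing n) :=
  IsLocalization.Away.isDomain (x := initialMonomial n) _ initialMonomial_ne_zero

theorem algebraMap_laurentRing_injective :
    Function.Injective (algebraMap (MvPolynomial (Fin n ⊕ Fin 2) ℤ) (LaurentRing n)) :=
  IsLocalization.injective _
    (powers_le_nonZeroDivisors_of_noZeroDivisors initialMonomial_ne_zero)

theorem prime_algebraMap_laurentRing {r : MvPolynomial (Fin n ⊕ Fin 2) ℤ} (hr : Prime r)
    (hunit : ¬IsUnit (algebraMap _ (LaurentRing n) r)) : Prime (algebraMap _ (LaurentRing n) r) :=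
  (IsLocalization.toLocalizationMap (Submonoid.powers (initialMonomial n))
    (LaurentRing n)).map_prime hr
    ((map_ne_zero_iff _ algebraMap_laurentRing_injective).2 hr.ne_zero) hunit

/-- The generators of the Laurent ring, forming the seed of the universal Gale–Robinson sequence. -/
noncomputable def laurentX (s : Fin n ⊕ Fin 2) : LaurentRing n :=
  algebraMap (MvPolynomial (Fin n ⊕ Fin 2) ℤ) (LaurentRing n) (X s)

theorem isUnit_laurentX_inl (i : Fin n) : IsUnit (laurentX (Sum.inl i)) :=
  IsLocalization.Away.isUnit_of_dvd (initialMonomial n)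
    (Finset.dvd_prod_of_mem (fun i => X (Sum.inl i)) (Finset.mem_univ i))

theorem aeval_initialMonomial {K : Type*} [CommRing K] (w : Fin n ⊕ Fin 2 → K) :
    aeval w (initialMonomial n) = ∏ i, w (Sum.inl i) := by
  simp [initialMonomial]

theorem isUnit_aeval_initialMonomial {K : Type*} [CommRing K] {w : Fin n ⊕ Fin 2 → K}
    (hw : ∀ i, IsUnit (w (Sum.inl i))) : IsUnit ((aeval w).toRingHom (initialMonomial n)) := by
  simpa [aeval_initialMonomial] using hw

/-- Evaluation of Laurent polynomials at a seed whose initial terms are units. -/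
noncomputable def laurentEval {K : Type*} [CommRing K] (w : Fin n ⊕ Fin 2 → K)
    (hw : ∀ i, IsUnit (w (Sum.inl i))) : LaurentRing n →+* K :=
  IsLocalization.Away.lift (initialMonomial n) (isUnit_aeval_initialMonomial hw)

section Eval

variable {K : Type*} [CommRing K] (w : Fin n ⊕ Fin 2 → K) (hw : ∀ i, IsUnit (w (Sum.inl i)))

theorem laurentEval_algebraMap (r : MvPolynomial (Fin n ⊕ Fin 2) ℤ) :
    laurentEval w hw (algebraMap _ _ r) = aeval w r :=
  IsLocalization.Away.lift_eq (initialMonomial n) (isUnit_aeval_initialMonomial hw) r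

theorem laurentEval_comp_laurentX : laurentEval w hw ∘ laurentX = w :=
  funext fun s => by rw [Function.comp_apply, laurentX, laurentEval_algebraMap, aeval_X]

theorem exists_laurentEval_mul_prod_pow_eq_aeval (z : LaurentRing n) :
    ∃ (e : ℕ) (r : MvPolynomial (Fin n ⊕ Fin 2) ℤ),
      laurentEval w hw z * (∏ i, w (Sum.inl i)) ^ e = aeval w r := by
  obtain ⟨e, r, h⟩ := IsLocalization.Away.surj (initialMonomial n) z
  refine ⟨e, r, ?_⟩
  simpa [laurentEval_algebraMap, aeval_initialMonomial] using congrArg (laurentEval w hw) h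

theorem exists_laurentEval_mul_prod_pow_eq_map {R : Type*} [CommRing R] (f : R →+* K)
    (w : Fin n ⊕ Fin 2 → R) (hw : ∀ i, IsUnit ((f ∘ w) (Sum.inl i))) (z : LaurentRing n) :
    ∃ (e : ℕ) (r : R), laurentEval (f ∘ w) hw z * f (∏ i, w (Sum.inl i)) ^ e = f r := by
  obtain ⟨e, r, h⟩ := exists_laurentEval_mul_prod_pow_eq_aeval (f ∘ w) hw z
  refine ⟨e, aeval w r, ?_⟩
  rw [map_prod]
  exact h.trans (comp_aeval_apply w f.toIntAlgHom r).symm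

theorem laurentEval_injective (h : AlgebraicIndependent ℤ w) :
    Function.Injective (laurentEval w hw) := by
  refine (IsLocalization.injective_iff_map_algebraMap_eq
    (Submonoid.powers (initialMonomial n)) _).2 fun r s => ?_
  rw [laurentEval_algebraMap, laurentEval_algebraMap,
    (algebraicIndependent_iff_injective_aeval.1 h).eq_iff,
    algebraMap_laurentRing_injective.eq_iff]

end Eval

theorem laurentEval_mem_adjoin {K : Type*} [Field K] (w : Fin n ⊕ Fin 2 → K)
    (hw : ∀ i, IsUnit (w (Sum.inl i))) (z : LaurentRing n) :
    laurentEval w hw z ∈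
      Algebra.adjoin ℤ (Set.range w ∪ Set.range fun i : Fin n => (w (Sum.inl i))⁻¹) := by
  obtain ⟨e, r, h⟩ := exists_laurentEval_mul_prod_pow_eq_aeval w hw z
  have hprod : ∏ i, w (Sum.inl i) ≠ 0 := Finset.prod_ne_zero_iff.2 fun i _ => (hw i).ne_zero
  rw [(eq_mul_inv_iff_mul_eq₀ (pow_ne_zero e hprod)).2 h, ← inv_pow, ← Finset.prod_inv_distrib]
  apply mul_mem (Algebra.adjoin_mono Set.subset_union_left (aeval_mem_adjoin_range w r))
  exact Subalgebra.pow_mem _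
    (Subalgebra.prod_mem _ fun i _ =>
      Algebra.subset_adjoin (Set.mem_union_right _ (Set.mem_range_self i))) e

end LaurentRing

section Universal

variable {n p q M : ℕ} {c : ℕ → LaurentRing n}

theorem IsGaleRobinsonBelow.laurentEval_eq {K : Type*} [CommRing K] [IsDomain K] (hp : 0 < p)
    (hpn : p < n) (hq : 0 < q) (hqn : q < n) (hc : IsGaleRobinsonBelow p q M laurentX c)
    {w : Fin n ⊕ Fin 2 → K} (hw : ∀ i, IsUnit (w (Sum.inl i))) {y : ℕ → K}
    (hy : IsGaleRobinsonBelow p q M w y) (hne : ∀ k, k + n < M → y k ≠ 0) :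
    ∀ j < M, laurentEval w hw (c j) = y j := by
  have hmap := hc.map (laurentEval w hw)
  rw [laurentEval_comp_laurentX] at hmap
  exact hmap.eqOn hp hpn hq hqn hy hne

/-- The term `X + (j - n)` of the arithmetic progression in `ℚ⟦X⟧` to which the universal
Gale–Robinson sequence is specialized in order to separate its `n`-th term from the others. -/
noncomputable def linearSeries (n j : ℕ) : PowerSeries ℚ :=
  PowerSeries.X - (n : PowerSeries ℚ) + (j : PowerSeries ℚ)

theorem constantCoeff_linearSeries (j : ℕ) :
    PowerSeries.constantCoeff (linearSeries n j) = j - n := by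
  simp [linearSeries, sub_eq_neg_add]

theorem isUnit_linearSeries_iff {j : ℕ} : IsUnit (linearSeries n j) ↔ j ≠ n := by
  rw [PowerSeries.isUnit_iff_constantCoeff, constantCoeff_linearSeries, isUnit_iff_ne_zero,
    sub_ne_zero, Nat.cast_inj.ne]

theorem linearSeries_ne_zero (j : ℕ) : linearSeries n j ≠ 0 := by
  rcases eq_or_ne j n with rfl | hj
  · simp [linearSeries, PowerSeries.X_ne_zero]
  · exact (isUnit_linearSeries_iff.2 hj).ne_zero

theorem IsGaleRobinsonBelow.exists_hom_eq_linearSeries (hp : 0 < p) (hpq : p < q) (hqn : 2 * q ≤ n)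
    (hc : IsGaleRobinsonBelow p q M laurentX c) :
    ∃ φ : LaurentRing n →+* PowerSeries ℚ, ∀ j < M, φ (c j) = linearSeries n j := by
  obtain ⟨a, b, hab, h⟩ := exists_add_eq_one_and_mul_add_mul_eq_zero (K := ℚ) (p := p) (q := q)
    (n := n) (by exact_mod_cast hpq.ne) (by norm_cast; lia)
  have hseries := isGaleRobinsonBelow_arithmeticProgression (M := M) (p := p) (q := q) (n := n)
    (by lia) (by lia) (by simpa using congrArg (PowerSeries.C (R := ℚ)) hab)
    (by simpa using congrArg (PowerSeries.C (R := ℚ)) h) (PowerSeries.X - (n : PowerSeries ℚ))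
  have hw (i : Fin n) : IsUnit (linearSeries n i) := isUnit_linearSeries_iff.2 i.2.ne
  exact ⟨laurentEval _ hw, hc.laurentEval_eq hp (by lia) (by lia) (by lia) _ hseries
    fun k _ => linearSeries_ne_zero k⟩

theorem IsGaleRobinsonBelow.ne_zero (hp : 0 < p) (hpq : p < q) (hqn : 2 * q ≤ n)
    (hc : IsGaleRobinsonBelow p q M laurentX c) {j : ℕ} (hj : j < M) : c j ≠ 0 := by
  obtain ⟨φ, hφ⟩ := hc.exists_hom_eq_linearSeries hp hpq hqn
  exact ne_zero_of_map (f := φ) (hφ j hj ▸ linearSeries_ne_zero j)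

theorem IsGaleRobinsonBelow.not_isUnit_order (hp : 0 < p) (hpq : p < q) (hqn : 2 * q ≤ n)
    (hc : IsGaleRobinsonBelow p q M laurentX c) (hnM : n < M) : ¬IsUnit (c n) := by
  obtain ⟨φ, hφ⟩ := hc.exists_hom_eq_linearSeries hp hpq hqn
  intro h
  exact isUnit_linearSeries_iff.1 (hφ n hnM ▸ h.map φ) rfl

theorem IsGaleRobinsonBelow.not_order_dvd (hp : 0 < p) (hpq : p < q) (hqn : 2 * q ≤ n)
    (hc : IsGaleRobinsonBelow p q M laurentX c) (hnM : n < M) {j : ℕ} (hj : j < M) (hjn : j ≠ n) :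
    ¬c n ∣ c j := by
  obtain ⟨φ, hφ⟩ := hc.exists_hom_eq_linearSeries hp hpq hqn
  intro h
  have hdvd : linearSeries n n ∣ linearSeries n j := hφ n hnM ▸ hφ j hj ▸ map_dvd φ h
  exact isUnit_linearSeries_iff.1 (isUnit_of_dvd_unit hdvd (isUnit_linearSeries_iff.2 hjn)) rfl

theorem IsGaleRobinsonBelow.isUnit_of_lt (hc : IsGaleRobinsonBelow p q M laurentX c) {j : ℕ}
    (hj : j < n) : IsUnit (c j) :=
  hc.init ⟨j, hj⟩ ▸ isUnit_laurentX_inl ⟨j, hj⟩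

theorem IsGaleRobinsonBelow.prime_order (hp : 0 < p) (hpq : p < q) (hqn : 2 * q ≤ n)
    (hc : IsGaleRobinsonBelow p q M laurentX c) (hnM : n < M) : Prime (c n) := by
  let var (i : ℕ) (hi : i < n) : Fin n ⊕ Fin 2 := Sum.inl ⟨i, hi⟩
  let N : MvPolynomial (Fin n ⊕ Fin 2) ℤ :=
    X (Sum.inr 0) * X (var p (by lia)) * X (var (n - p) (by lia)) +
      X (Sum.inr 1) * X (var q (by lia)) * X (var (n - q) (by lia))
  have hN : Prime N := by
    refine prime_X_mul_X_mul_X_add Sum.inr_ne_inl Sum.inr_ne_inl ?_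
    simp only [var, Set.disjoint_insert_left, Set.disjoint_singleton_left, Set.mem_insert_iff,
      Set.mem_singleton_iff, reduceCtorEq, Sum.inl.injEq, Sum.inr.injEq, Fin.mk.injEq]
    lia
  have hinit (i : ℕ) (hi : i < n) : c i = algebraMap _ _ (X (var i hi)) := hc.init ⟨i, hi⟩
  have hNc : algebraMap _ (LaurentRing n) N = c n * c 0 := by
    have h := hc.relation 0 (by lia)
    simp only [zero_add, exchange] at h
    rw [h, hinit p (by lia), hinit q (by lia), hinit (n - p) (by lia), hinit (n - q) (by lia)]
    simp [N, laurentX]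
  have hassoc : Associated (algebraMap _ (LaurentRing n) N) (c n) :=
    hNc ▸ associated_mul_unit_left _ _ (hc.isUnit_of_lt (by lia))
  exact hassoc.prime (prime_algebraMap_laurentRing hN
    (hassoc.isUnit_iff.not.2 (hc.not_isUnit_order hp hpq hqn hnM)))

-- Seen from the window `c s, …, c (s + n - 1)`, the quotient of `exchange p q laurentX c k` by
-- `c k` is the term of index `k + n - s`, a Laurent polynomial in the window by `hc`.
theorem IsGaleRobinsonBelow.exists_dvd_exchange_mul_prod_pow (hp : 0 < p) (hpq : p < q)
    (hqn : 2 * q ≤ n) {k s : ℕ} (hc : IsGaleRobinsonBelow p q (k + n) laurentX c) (hs : 0 < s)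
    (hsk : s ≤ k) :
    ∃ e : ℕ, c k ∣ exchange p q laurentX c k * (∏ i : Fin n, c (i + s)) ^ e := by
  obtain ⟨k, rfl⟩ := Nat.exists_eq_add_of_le' hsk
  let ι := algebraMap (LaurentRing n) (FractionRing (LaurentRing n))
  have hι : Function.Injective ι := IsFractionRing.injective _ _
  have hne {j : ℕ} (hj : j < k + s + n) : ι (c j) ≠ 0 :=
    (map_ne_zero_iff ι hι).2 (hc.ne_zero hp hpq hqn hj)
  let w : Fin n ⊕ Fin 2 → LaurentRing n :=
    Sum.elim (fun i : Fin n => c (i + s)) (laurentX ∘ Sum.inr)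
  have hw (i : Fin n) : IsUnit ((ι ∘ w) (Sum.inl i)) := (hne (by lia)).isUnit
  have hshift : IsGaleRobinsonBelow p q (k + n) (ι ∘ w) (fun j => ι (c (j + s))) :=
    (IsGaleRobinsonBelow.shift (Nat.add_right_comm k s n ▸ hc)).map ι
  let φ := laurentEval (ι ∘ w) hw
  have hφ : ∀ j < k + n, φ (c j) = ι (c (j + s)) :=
    (hc.mono (by lia)).laurentEval_eq hp (by lia) (by lia) (by lia) hw hshift
      fun _ _ => hne (by lia)
  have hrel : φ (c (k + n)) * ι (c (k + s)) = ι (exchange p q laurentX c (k + s)) := by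
    calc φ (c (k + n)) * ι (c (k + s)) = φ (c (k + n) * c k) := by rw [map_mul, hφ k (by lia)]
      _ = exchange p q (φ ∘ laurentX) (φ ∘ c) k := by rw [hc.relation k (by lia), map_exchange]
      _ = exchange p q (ι ∘ w) (ι ∘ fun j => c (j + s)) k := by
        rw [laurentEval_comp_laurentX]
        exact exchange_congr hp (by lia) (by lia) (by lia) _ hφ
      _ = ι (exchange p q laurentX c (k + s)) := by rw [← map_exchange, exchange_shift]
  obtain ⟨e, r, hr⟩ := exists_laurentEval_mul_prod_pow_eq_map ι w hw (c (k + n))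
  refine ⟨e, r, hι ?_⟩
  calc ι (exchange p q laurentX c (k + s) * (∏ i : Fin n, c (i + s)) ^ e)
      = ι (c (k + s)) * (φ (c (k + n)) * ι (∏ i, w (Sum.inl i)) ^ e) := by
        rw [map_mul, map_pow, ← hrel]
        simp only [w, Sum.elim_inl]
        ring
    _ = ι (c (k + s) * r) := by rw [hr, map_mul]

theorem IsGaleRobinsonBelow.dvd_exchange_of_lt (hp : 0 < p) (hpq : p < q) (hqn : 2 * q ≤ n) {k : ℕ}
    (hc : IsGaleRobinsonBelow p q (k + n) laurentX c) (hnk : n < k) :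
    c k ∣ exchange p q laurentX c k := by
  obtain ⟨n, rfl⟩ := Nat.exists_eq_add_one_of_ne_zero (show n ≠ 0 by lia)
  have hprime := hc.prime_order hp hpq hqn (by lia)
  obtain ⟨e, he⟩ := hc.exists_dvd_exchange_mul_prod_pow hp hpq hqn one_pos (by lia)
  obtain ⟨d, hd⟩ := hc.exists_dvd_exchange_mul_prod_pow hp hpq hqn (s := n + 2) (by lia) hnk
  have hunit : IsUnit (∏ i : Fin n, c (i + 1)) :=
    IsUnit.prod_univ_iff.2 fun i => hc.isUnit_of_lt (by lia)
  have hndvd : ¬c (n + 1) ∣ (∏ i : Fin (n + 1), c (i + (n + 2))) ^ d := fun h => by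
    obtain ⟨i, -, hi⟩ := hprime.exists_mem_finset_dvd (hprime.dvd_of_dvd_pow h)
    exact hc.not_order_dvd hp hpq hqn (by lia) (by lia) (by lia) hi
  simp only [Fin.prod_univ_castSucc, Fin.val_castSucc, Fin.val_last] at he
  rw [mul_pow, mul_left_comm, (hunit.pow e).dvd_mul_left] at he
  exact dvd_of_dvd_mul_prime_pow_of_dvd_mul hprime hndvd he hd

theorem IsGaleRobinsonBelow.exists_succ (hp : 0 < p) (hpq : p < q) (hqn : 2 * q ≤ n)
    (hc : IsGaleRobinsonBelow p q M laurentX c) (hnM : n ≤ M) :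
    ∃ c' : ℕ → LaurentRing n, IsGaleRobinsonBelow p q (M + 1) laurentX c' := by
  obtain ⟨k, rfl⟩ := Nat.exists_eq_add_of_le' hnM
  have hdvd : c k ∣ exchange p q laurentX c k := by
    rcases lt_trichotomy k n with hkn | rfl | hnk
    · exact (hc.isUnit_of_lt hkn).dvd
    · exact (two_mul k ▸ hc).dvd_exchange_order hp (by lia) (by lia) (by lia)
        fun i => hc.isUnit_of_lt
    · exact hc.dvd_exchange_of_lt hp hpq hqn hnk
  obtain ⟨z, hz⟩ := hdvd
  let c' := Function.update c (k + n) z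
  have hc' (j : ℕ) (hj : j < k + n) : c' j = c j := Function.update_of_ne hj.ne z c
  refine ⟨c', fun i => (hc' i (by lia)).trans (hc.init i), fun j hj => ?_⟩
  rw [exchange_congr hp (by lia) (by lia) (by lia) laurentX fun i hi => hc' i (by lia),
    hc' j (by lia)]
  rcases (Nat.lt_succ_iff.1 hj).lt_or_eq with hlt | heq
  · rw [hc' _ hlt, hc.relation j hlt]
  · obtain rfl : j = k := by lia
    rw [show c' (j + n) = z from Function.update_self .., mul_comm, ← hz]

theorem exists_isGaleRobinsonBelow (hp : 0 < p) (hpq : p < q) (hqn : 2 * q ≤ n) (M : ℕ) :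
    ∃ c : ℕ → LaurentRing n, IsGaleRobinsonBelow p q M laurentX c := by
  suffices h : ∃ c : ℕ → LaurentRing n, IsGaleRobinsonBelow p q (M + n) laurentX c from
    h.imp fun _ hc => hc.mono (by lia)
  induction M with
  | zero =>
    refine ⟨fun i => if hi : i < n then laurentX (Sum.inl ⟨i, hi⟩) else 0, ?_, ?_⟩
    · intro i
      simp
    · intro k hk
      lia
  | succ M ih =>
    obtain ⟨c, hc⟩ := ih
    exact Nat.add_right_comm M n 1 ▸ hc.exists_succ hp hpq hqn (by lia)

end Universal

section Field

variable {n p q : ℕ} {K : Type*} [Field K]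

theorem isGaleRobinsonBelow_of_eq_div {w : Fin n ⊕ Fin 2 → K} {y : ℕ → K}
    (hinit : ∀ i : Fin n, y i = w (Sum.inl i)) (hrec : ∀ k, y (k + n) = exchange p q w y k / y k)
    {M : ℕ} (hne : ∀ k, k + n < M → y k ≠ 0) : IsGaleRobinsonBelow p q M w y where
  init := hinit
  relation k hk := by rw [hrec, div_mul_cancel₀ _ (hne k hk)]

theorem ne_zero_of_algebraicIndependent (hp : 0 < p) (hpq : p < q) (hqn : 2 * q ≤ n)
    {w : Fin n ⊕ Fin 2 → K} (hw : AlgebraicIndependent ℤ w) {y : ℕ → K}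
    (hinit : ∀ i : Fin n, y i = w (Sum.inl i)) (hrec : ∀ k, y (k + n) = exchange p q w y k / y k)
    (m : ℕ) : y m ≠ 0 := by
  have hunit (i : Fin n) : IsUnit (w (Sum.inl i)) := (hw.ne_zero _).isUnit
  induction m using Nat.strong_induction_on with
  | _ m ih =>
  have hne (k : ℕ) (hk : k + n < m + 1) : y k ≠ 0 := ih k (by lia)
  obtain ⟨c, hc⟩ := exists_isGaleRobinsonBelow hp hpq hqn (m + 1)
  rw [← hc.laurentEval_eq hp (by lia) (by lia) (by lia) hunit
    (isGaleRobinsonBelow_of_eq_div hinit hrec hne) hne m (Nat.lt_add_one m)]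
  exact (map_ne_zero_iff _ (laurentEval_injective w hunit hw)).2
    (hc.ne_zero hp hpq hqn (Nat.lt_add_one m))

end Field

end GaleRobinson

open GaleRobinson in
theorem two_term_gale_robinson_laurent_general {n p q : ℕ} (hp : 0 < p) (hpq : p < q)
    (hqn : 2 * q ≤ n) {K : Type*} [Field K] {α β : K} {y : ℕ → K} (hne : ∀ k, y k ≠ 0)
    (hrec : ∀ k : ℕ,
      y (k + n) = (α * y (k + p) * y (k + (n - p)) + β * y (k + q) * y (k + (n - q))) / y k)
    (m : ℕ) : y m ∈ Algebra.adjoin ℤ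
      (Set.range (fun i : Fin n => y i) ∪ Set.range (fun i : Fin n => (y i)⁻¹) ∪ {α, β}) := by
  let w : Fin n ⊕ Fin 2 → K := Sum.elim (fun i => y i) ![α, β]
  have hw (i : Fin n) : IsUnit (w (Sum.inl i)) := (hne i).isUnit
  obtain ⟨c, hc⟩ := exists_isGaleRobinsonBelow hp hpq hqn (m + 1)
  have hy : IsGaleRobinsonBelow p q (m + 1) w y :=
    isGaleRobinsonBelow_of_eq_div (fun _ => rfl) hrec fun k _ => hne k
  rw [← hc.laurentEval_eq hp (by lia) (by lia) (by lia) hw hy (fun k _ => hne k) m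
    (Nat.lt_add_one m)]
  have hrange : Set.range w = Set.range (fun i : Fin n => y i) ∪ {α, β} := by
    rw [Set.Sum.elim_range, Matrix.range_cons_cons_empty]
  rw [Set.union_right_comm, ← hrange]
  exact laurentEval_mem_adjoin w hw (c m)

/-- The two-term Gale–Robinson recurrence
y_{k+n} y_k = α y_{k+p} y_{k+n-p} + β y_{k+q} y_{k+n-q}
exhibits the Laurent phenomenon over ℤ[α,β]. -/
theorem two_term_gale_robinson_laurent
    (n p q : ℕ) (hp : 0 < p) (hpq : p < q) (hqn : 2 * q ≤ n)
    (F : Type*) [Field F] [Algebra (MvPolynomial (Fin n ⊕ Fin 2) ℤ) F]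
    [IsFractionRing (MvPolynomial (Fin n ⊕ Fin 2) ℤ) F]
    (x : Fin n ⊕ Fin 2 → F)
    (hx : ∀ s, x s = algebraMap (MvPolynomial (Fin n ⊕ Fin 2) ℤ) F (X s))
    (α β : F) (hα : α = x (Sum.inr 0)) (hβ : β = x (Sum.inr 1))
    (y : ℕ → F)
    (hinit : ∀ i : Fin n, y i = x (Sum.inl i))
    (hrec : ∀ k : ℕ,
      y (k + n) = (α * y (k + p) * y (k + (n - p)) + β * y (k + q) * y (k + (n - q))) / y k) :
    ∀ m : ℕ, y m ∈ Algebra.adjoin ℤ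
      (Set.range (fun i : Fin n => x (Sum.inl i)) ∪
       Set.range (fun i : Fin n => (x (Sum.inl i))⁻¹) ∪ {α, β}) := by
  subst hα hβ
  have hxind : AlgebraicIndependent ℤ x := by
    obtain rfl : x = _ := funext hx
    exact (MvPolynomial.algebraicIndependent_X _ ℤ).map'
      (f := (algebraMap (MvPolynomial (Fin n ⊕ Fin 2) ℤ) F).toIntAlgHom)
      (IsFractionRing.injective _ F)
  have hne := GaleRobinson.ne_zero_of_algebraicIndependent hp hpq hqn hxind hinit hrec
  simpa only [hinit] using two_term_gale_robinson_laurent_general hp hpq hqn hne hrec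
end

section
/- Let p, q, r be distinct positive integers with n = p+q+r, let α,β,γ be indeterminates, and let y : ℕ → F, F the field of rational functions over ℤ[α,β,γ] in y₀,…,y_{n-1}, satisfy y(k+n) = (α y(k+p) y(k+n−p) + β y(k+q) y(k+n−q) + γ y(k+r) y(k+n−r))/y(k). Then every y(m) lies in ℤ[α,β,γ][y₀^{±1},…,y_{n−1}^{±1}]. -/
open MvPolynomial

/-!
Work in the Laurent ring `L` and induct on `m`. For `m < 2n` the recurrence divides only by
variables, and for `m = 2n` an explicit identity clears the denominator `y n`. For `m > 2n`, the
induction hypothesis applied to the shifted sequences `y (1 + ·)` and `y (n + 1 + ·)` writes `y m`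
as a Laurent polynomial in `y 1, …, y n` and in `y (n + 1), …, y (2n)`. Multiplied by suitable
powers of `y n` and of `y (n + 1) ⋯ y (2n)`, it therefore lies in `L`. Now `y n` is prime in `L`,
because up to a unit it is of degree one in a coefficient, and it divides no `y (n + i)` with
`1 ≤ i ≤ n`: in the specialization `y k = t + (k - n)`, an arithmetic progression over `ℚ⟦t⟧`, it
becomes `t` whereas `y (n + i)` becomes a unit. Hence `y m ∈ L`. This specialization exists unless
`p = q = r`, and then `y (k + 2p) / y k` is a geometric progression along multiples of `p`.
-/

/-- The ring of integral Laurent polynomials in the variables `σ` with coefficients polynomial in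
the variables `τ`, realized by inverting the product of the variables `σ`. -/
abbrev LaurentRing (σ τ : Type*) [Fintype σ] : Type _ :=
  Localization.Away (∏ i : σ, X (Sum.inl i) : MvPolynomial (σ ⊕ τ) ℤ)

namespace LaurentRing

variable {σ τ : Type*} [Fintype σ]

/-- A variable of the Laurent ring; those in `σ` are invertible. -/
noncomputable def var (s : σ ⊕ τ) : LaurentRing σ τ :=
  algebraMap (MvPolynomial (σ ⊕ τ) ℤ) (LaurentRing σ τ) (X s)

instance : IsDomain (LaurentRing σ τ) :=
  IsLocalization.isDomain_localization <| powers_le_nonZeroDivisors_of_noZeroDivisors <|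
    Finset.prod_ne_zero_iff.2 fun _ _ => X_ne_zero _

lemma isUnit_var_inl (i : σ) : IsUnit (var (τ := τ) (Sum.inl i)) := by
  have h := IsLocalization.Away.algebraMap_isUnit (S := LaurentRing σ τ)
    (∏ i : σ, X (Sum.inl i) : MvPolynomial (σ ⊕ τ) ℤ)
  rw [map_prod, IsUnit.prod_univ_iff] at h
  exact h i

lemma hom_ext {R : Type*} [CommRing R] {φ ψ : LaurentRing σ τ →+* R}
    (h : ∀ s, φ (var s) = ψ (var s)) : φ = ψ :=
  IsLocalization.ringHom_ext (Submonoid.powers (∏ i : σ, X (Sum.inl i))) <|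
    MvPolynomial.ringHom_ext (fun _ => by simp) h

section Lift

variable {R : Type*} [CommRing R] (v : σ ⊕ τ → R) (hv : ∀ i, IsUnit (v (Sum.inl i)))

/-- Evaluation of Laurent polynomials at a point whose coordinates in `σ` are invertible. -/
noncomputable def lift : LaurentRing σ τ →+* R :=
  IsLocalization.Away.lift (∏ i : σ, X (Sum.inl i)) (g := (aeval (R := ℤ) v).toRingHom) <| by
    simpa [map_prod, IsUnit.prod_univ_iff] using hv

@[simp]
lemma lift_algebraMap (f : MvPolynomial (σ ⊕ τ) ℤ) :
    lift v hv (algebraMap _ _ f) = aeval v f :=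
  IsLocalization.Away.lift_eq _ _ _

@[simp]
lemma lift_var (s : σ ⊕ τ) : lift v hv (var s) = v s := by
  simp [var]

lemma lift_injective (h : AlgebraicIndependent ℤ v) : Function.Injective (lift v hv) := by
  have h_inj : Function.Injective (algebraMap (MvPolynomial (σ ⊕ τ) ℤ) (LaurentRing σ τ)) :=
    IsLocalization.injective _ (M := Submonoid.powers (∏ i : σ, X (Sum.inl i))) <|
      powers_le_nonZeroDivisors_of_noZeroDivisors <|
        Finset.prod_ne_zero_iff.2 fun _ _ => X_ne_zero _
  exact IsLocalization.lift_injective_iff _ |>.2 fun f g => h_inj.eq_iff.trans h.eq_iff.symm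

lemma exists_lift_mul_prod_pow_mem {B : Subring R} (hB : ∀ s, v s ∈ B) (z : LaurentRing σ τ) :
    ∃ k : ℕ, lift v hv z * (∏ i, v (Sum.inl i)) ^ k ∈ B := by
  obtain ⟨k, f, hf⟩ :=
    IsLocalization.Away.surj (∏ i : σ, X (Sum.inl i) : MvPolynomial (σ ⊕ τ) ℤ) z
  have h_eval := congrArg (lift v hv) hf
  simp only [map_mul, map_pow, lift_algebraMap, map_prod, aeval_X] at h_eval
  exact ⟨k, h_eval ▸ eval₂_mem (fun i _ => by simp) hB⟩

end Lift

lemma lift_mem_adjoin {K : Type*} [Field K] (v : σ ⊕ τ → K) (hv : ∀ i, IsUnit (v (Sum.inl i)))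
    (z : LaurentRing σ τ) :
    lift v hv z ∈ Algebra.adjoin ℤ (Set.range (fun i => v (Sum.inl i)) ∪
      Set.range (fun i => (v (Sum.inl i))⁻¹) ∪ Set.range (fun t => v (Sum.inr t))) := by
  set A := Algebra.adjoin ℤ (Set.range (fun i => v (Sum.inl i)) ∪
    Set.range (fun i => (v (Sum.inl i))⁻¹) ∪ Set.range (fun t => v (Sum.inr t)))
  have h_var : ∀ s, v s ∈ A.toSubring := by
    rintro (i | t)
    · exact Algebra.subset_adjoin (.inl (.inl ⟨i, rfl⟩))
    · exact Algebra.subset_adjoin (.inr ⟨t, rfl⟩)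
  have h_inv : ∏ i, (v (Sum.inl i))⁻¹ ∈ A :=
    prod_mem fun i _ => Algebra.subset_adjoin (.inl (.inr ⟨i, rfl⟩))
  obtain ⟨k, hk⟩ := exists_lift_mul_prod_pow_mem v hv h_var z
  have h_ne : (∏ i, v (Sum.inl i)) ^ k ≠ 0 :=
    pow_ne_zero k (Finset.prod_ne_zero_iff.2 fun i _ => (hv i).ne_zero)
  rw [← mul_inv_cancel_right₀ h_ne (lift v hv z), ← inv_pow, ← Finset.prod_inv_distrib]
  exact mul_mem hk (pow_mem h_inv k)

/-- The endomorphism substituting `w` for the variable `t` and fixing the other variables. -/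
noncomputable def substInr [DecidableEq σ] [DecidableEq τ] (t : τ) (w : LaurentRing σ τ) :
    LaurentRing σ τ →+* LaurentRing σ τ :=
  lift (Function.update var (Sum.inr t) w) fun i => by
    simpa using isUnit_var_inl i

section Prime

variable [DecidableEq σ] [DecidableEq τ] {t : τ} {v w : LaurentRing σ τ}

@[simp]
lemma substInr_var_self : substInr t w (var (Sum.inr t)) = w := by
  simp [substInr]

@[simp]
lemma substInr_var_inl (i : σ) : substInr t w (var (Sum.inl i)) = var (Sum.inl i) := by
  simp [substInr]

lemma substInr_var_of_ne {s : σ ⊕ τ} (hs : s ≠ Sum.inr t) : substInr t w (var s) = var s := by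
  simp [substInr, hs]

lemma dvd_sub_substInr (z : LaurentRing σ τ) : var (Sum.inr t) - w ∣ z - substInr t w z := by
  have h_eq : (Ideal.Quotient.mk (Ideal.span {var (Sum.inr t) - w})).comp (substInr t w) =
      Ideal.Quotient.mk (Ideal.span {var (Sum.inr t) - w}) := by
    refine hom_ext fun s => ?_
    by_cases hs : s = Sum.inr t
    · subst hs
      rw [RingHom.comp_apply, substInr_var_self, eq_comm, Ideal.Quotient.eq,
        Ideal.mem_span_singleton]
    · rw [RingHom.comp_apply, substInr_var_of_ne hs]
  rw [← Ideal.mem_span_singleton, ← Ideal.Quotient.eq]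
  exact (RingHom.congr_fun h_eq z).symm

lemma prime_var_inr_sub (hw : ∀ w', substInr t w' w = w) : Prime (var (Sum.inr t) - w) := by
  have h_ne : var (Sum.inr t) - w ≠ 0 := fun h => by
    have h_subst := congrArg (substInr t (w + 1)) h
    rw [map_sub, substInr_var_self, hw, map_zero] at h_subst
    exact one_ne_zero (by linear_combination h_subst)
  have h_ker : RingHom.ker (substInr t w) = Ideal.span {var (Sum.inr t) - w} := by
    ext z
    rw [RingHom.mem_ker, Ideal.mem_span_singleton]
    refine ⟨fun hz => by simpa [hz] using dvd_sub_substInr (t := t) (w := w) z, ?_⟩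
    rintro ⟨c, rfl⟩
    simp [hw]
  rw [← Ideal.span_singleton_prime h_ne, ← h_ker]
  exact RingHom.ker_isPrime _

lemma prime_var_inr_mul_add {u : LaurentRing σ τ} (hu : IsUnit u)
    (hu_fix : ∀ w, substInr t w u = u) (hv_fix : ∀ w, substInr t w v = v) :
    Prime (var (Sum.inr t) * u + v) := by
  obtain ⟨u', hu'⟩ := hu.exists_right_inv
  have hu'_fix : ∀ w, substInr t w u' = u' := fun w => by
    have h := congrArg (substInr t w) hu'
    rw [map_mul, hu_fix, map_one, ← hu'] at h
    exact hu.mul_left_cancel h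
  have h_prime : Prime (var (Sum.inr t) - -(v * u')) :=
    prime_var_inr_sub fun w => by rw [map_neg, map_mul, hv_fix, hu'_fix]
  have h_eq : var (Sum.inr t) * u + v = (var (Sum.inr t) - -(v * u')) * u := by
    linear_combination (-v) * hu'
  rw [h_eq]
  exact (associated_mul_unit_left _ _ hu).symm.prime h_prime

end Prime

end LaurentRing

lemma mem_range_of_mul_pow_mem_range {R S : Type*} [CommRing R] [IsDomain R] [CommRing S]
    [IsDomain S] {j : R →+* S} (hj : Function.Injective j) {P D : R} (hP : Prime P)
    (hPD : ¬ P ∣ D) {z : S} {k l : ℕ} (hk : z * j P ^ k ∈ j.range)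
    (hl : z * j D ^ l ∈ j.range) : z ∈ j.range := by
  obtain ⟨g, hg⟩ := hk
  obtain ⟨h, hh⟩ := hl
  have h_cross : g * D ^ l = P ^ k * h := hj <| by
    simp only [map_mul, map_pow, hg, hh]
    ring
  obtain ⟨w, rfl⟩ : P ^ k ∣ g :=
    hP.pow_dvd_of_dvd_mul_right k (fun hd => hPD (hP.dvd_of_dvd_pow hd)) ⟨h, h_cross⟩
  have h_ne : j P ^ k ≠ 0 := pow_ne_zero k ((map_ne_zero_iff j hj).2 hP.ne_zero)
  refine ⟨w, mul_right_cancel₀ h_ne ?_⟩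
  rw [← hg, map_mul, map_pow, mul_comm]

section PositiveFraction

variable {σ K : Type*} [Field K] {x : σ → K} {a b c : K}

/-- `w` is a quotient of two polynomials in `x` that are positive at `(1, …, 1)`. This property
survives sums, products and quotients, so it prevents a recurrence without subtraction from
producing zero. -/
def IsPositiveFraction (x : σ → K) (w : K) : Prop :=
  ∃ f g : MvPolynomial σ ℤ, 0 < eval 1 f ∧ 0 < eval 1 g ∧ w = aeval x f / aeval x g

lemma isPositiveFraction_self (s : σ) : IsPositiveFraction x (x s) :=
  ⟨X s, 1, by simp, by simp, by simp⟩

lemma aeval_ne_zero_of_eval_one_pos {R : Type*} [CommRing R] {x : σ → R}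
    (hx : AlgebraicIndependent ℤ x) {f : MvPolynomial σ ℤ} (hf : 0 < eval 1 f) :
    aeval x f ≠ 0 := fun h => by
  simp [hx.eq_zero_of_aeval_eq_zero f h] at hf

namespace IsPositiveFraction

lemma ne_zero (hx : AlgebraicIndependent ℤ x) (ha : IsPositiveFraction x a) : a ≠ 0 := by
  obtain ⟨f, g, hf, hg, rfl⟩ := ha
  exact div_ne_zero (aeval_ne_zero_of_eval_one_pos hx hf) (aeval_ne_zero_of_eval_one_pos hx hg)

lemma add (hx : AlgebraicIndependent ℤ x) (ha : IsPositiveFraction x a)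
    (hb : IsPositiveFraction x b) : IsPositiveFraction x (a + b) := by
  obtain ⟨f, g, hf, hg, rfl⟩ := ha
  obtain ⟨f', g', hf', hg', rfl⟩ := hb
  refine ⟨f * g' + g * f', g * g', ?_, ?_, ?_⟩
  · simp only [map_add, map_mul]; positivity
  · simp only [map_mul]; positivity
  · rw [div_add_div _ _ (aeval_ne_zero_of_eval_one_pos hx hg)
      (aeval_ne_zero_of_eval_one_pos hx hg')]
    simp only [map_add, map_mul]

lemma mul (ha : IsPositiveFraction x a) (hb : IsPositiveFraction x b) :
    IsPositiveFraction x (a * b) := by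
  obtain ⟨f, g, hf, hg, rfl⟩ := ha
  obtain ⟨f', g', hf', hg', rfl⟩ := hb
  refine ⟨f * f', g * g', ?_, ?_, ?_⟩
  · simp only [map_mul]; positivity
  · simp only [map_mul]; positivity
  · simp only [map_mul, div_mul_div_comm]

lemma inv (ha : IsPositiveFraction x a) : IsPositiveFraction x a⁻¹ := by
  obtain ⟨f, g, hf, hg, rfl⟩ := ha
  exact ⟨g, f, hg, hf, inv_div _ _⟩

lemma div (ha : IsPositiveFraction x a) (hb : IsPositiveFraction x b) :
    IsPositiveFraction x (a / b) :=
  div_eq_mul_inv a b ▸ ha.mul hb.inv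

lemma of_recurrence (hx : AlgebraicIndependent ℤ x) {p q r : ℕ} (hp : 0 < p) (hq : 0 < q)
    (hr : 0 < r) (ha : IsPositiveFraction x a) (hb : IsPositiveFraction x b)
    (hc : IsPositiveFraction x c) {y : ℕ → K}
    (h_init : ∀ i < p + q + r, IsPositiveFraction x (y i))
    (h_rec : ∀ k, y (k + (p + q + r)) = (a * y (k + p) * y (k + (q + r)) +
      b * y (k + q) * y (k + (p + r)) + c * y (k + r) * y (k + (p + q))) / y k) (m : ℕ) :
    IsPositiveFraction x (y m) := by
  induction m using Nat.strong_induction_on with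
  | _ m ih =>
  rcases lt_or_ge m (p + q + r) with h_lt | h_ge
  · exact h_init m h_lt
  obtain ⟨k, rfl⟩ := Nat.exists_eq_add_of_le' h_ge
  have ih' : ∀ i < p + q + r, IsPositiveFraction x (y (k + i)) := fun i hi => ih _ (by lia)
  rw [h_rec]
  exact ((((ha.mul (ih' p (by lia))).mul (ih' (q + r) (by lia))).add hx
    ((hb.mul (ih' q (by lia))).mul (ih' (p + r) (by lia)))).add hx
    ((hc.mul (ih' r (by lia))).mul (ih' (p + q) (by lia)))).div (ih k (by lia))

end IsPositiveFraction

end PositiveFraction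

/-- The sequence `y` satisfies the three-term Gale–Robinson recurrence with parameters `p, q, r`
and coefficients `a, b, c`, stated without division so that it makes sense in any ring. -/
def IsGaleRobinson {R : Type*} [CommRing R] (p q r : ℕ) (a b c : R) (y : ℕ → R) : Prop :=
  ∀ k, y k * y (k + (p + q + r)) = a * y (k + p) * y (k + (q + r)) +
    b * y (k + q) * y (k + (p + r)) + c * y (k + r) * y (k + (p + q))

namespace IsGaleRobinson

variable {p q r : ℕ}

section CommRing

variable {R : Type*} [CommRing R] {a b c : R} {y : ℕ → R}

lemma shift (hy : IsGaleRobinson p q r a b c y) (s : ℕ) :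
    IsGaleRobinson p q r a b c (fun k => y (s + k)) := fun k => by
  simpa only [add_assoc] using hy (s + k)

lemma of_add_natCast (h_sum : a + b + c = 1)
    (h_weight : a * (p * (q + r)) + b * (q * (p + r)) + c * (r * (p + q)) = 0) (t : R) :
    IsGaleRobinson p q r a b c (fun k => t + k) := fun k => by
  push_cast
  linear_combination (-((t + k) * (t + k + p + q + r))) * h_sum - h_weight

lemma mul_apply_two_mul [IsDomain R] (hy : IsGaleRobinson p q r a b c y)
    (h_ne : y (p + q + r) ≠ 0) :
    y (2 * (p + q + r)) * (y (q + r) * y (p + r) * y (p + q)) =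
      a ^ 2 * (y (p + q + r + p) * y (p + r) * y (p + q) * y (2 * (q + r)) -
        y (q + r) * y (p + q + r + q) * y (p + q + r + r) * y (2 * p)) +
      b ^ 2 * (y (p + q + r + q) * y (q + r) * y (p + q) * y (2 * (p + r)) -
        y (p + r) * y (p + q + r + p) * y (p + q + r + r) * y (2 * q)) +
      c ^ 2 * (y (p + q + r + r) * y (q + r) * y (p + r) * y (2 * (p + q)) -
        y (p + q) * y (p + q + r + p) * y (p + q + r + q) * y (2 * r)) +
      y (p + q + r + p) * y (p + q + r + q) * y (p + q + r + r) * y 0 := by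
  refine mul_left_cancel₀ h_ne ?_
  -- In the recurrence for `y n * y (2n)`, eliminate `y (n + q + r)`, `y (n + p + r)` and
  -- `y (n + p + q)`; the recurrences at `0, p, q, r` collect the mixed terms into multiples
  -- of `y n`.
  linear_combination (norm := ring_nf)
    y (q + r) * y (p + r) * y (p + q) * hy (p + q + r)
    + a * y (p + q + r + p) * y (p + r) * y (p + q) * hy (q + r)
    + b * y (p + q + r + q) * y (q + r) * y (p + q) * hy (p + r)
    + c * y (p + q + r + r) * y (q + r) * y (p + r) * hy (p + q)
    - y (p + q + r + p) * y (p + q + r + q) * y (p + q + r + r) * hy 0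
    - a * y (q + r) * y (p + q + r + q) * y (p + q + r + r) * hy p
    - b * y (p + r) * y (p + q + r + p) * y (p + q + r + r) * hy q
    - c * y (p + q) * y (p + q + r + p) * y (p + q + r + q) * hy r

end CommRing

section Field

variable {K : Type*} [Field K] {a b c : K} {y : ℕ → K} {B : Subring K}

lemma mem_of_lt_two_mul (hp : 0 < p) (hq : 0 < q) (hr : 0 < r)
    (hy : IsGaleRobinson p q r a b c y) (h_ne : ∀ k, y k ≠ 0) (ha : a ∈ B) (hb : b ∈ B)
    (hc : c ∈ B) (h_init : ∀ i < p + q + r, y i ∈ B) (h_inv : ∀ i < p + q + r, (y i)⁻¹ ∈ B) :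
    ∀ m < 2 * (p + q + r), y m ∈ B := by
  intro m
  induction m using Nat.strong_induction_on with
  | _ m ih =>
  intro hm
  rcases lt_or_ge m (p + q + r) with h_lt | h_ge
  · exact h_init m h_lt
  obtain ⟨k, rfl⟩ := Nat.exists_eq_add_of_le' h_ge
  rw [eq_div_of_mul_eq (h_ne k) ((mul_comm _ _).trans (hy k)), div_eq_mul_inv]
  have h_mem : ∀ i < p + q + r, y (k + i) ∈ B := fun i hi => ih _ (by lia) (by lia)
  exact mul_mem (add_mem (add_mem
    (mul_mem (mul_mem ha (h_mem p (by lia))) (h_mem (q + r) (by lia)))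
    (mul_mem (mul_mem hb (h_mem q (by lia))) (h_mem (p + r) (by lia))))
    (mul_mem (mul_mem hc (h_mem r (by lia))) (h_mem (p + q) (by lia)))) (h_inv k (by lia))

lemma mem_two_mul (hp : 0 < p) (hq : 0 < q) (hr : 0 < r) (hy : IsGaleRobinson p q r a b c y)
    (h_ne : ∀ k, y k ≠ 0) (ha : a ∈ B) (hb : b ∈ B) (hc : c ∈ B)
    (h_mem : ∀ i < 2 * (p + q + r), y i ∈ B) (h_inv : ∀ i < p + q + r, (y i)⁻¹ ∈ B) :
    y (2 * (p + q + r)) ∈ B := by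
  have h_den : y (q + r) * y (p + r) * y (p + q) ≠ 0 :=
    mul_ne_zero (mul_ne_zero (h_ne _) (h_ne _)) (h_ne _)
  rw [eq_div_of_mul_eq h_den (hy.mul_apply_two_mul (h_ne _)), div_eq_mul_inv, mul_inv, mul_inv]
  repeat' first
    | assumption
    | exact h_inv _ (by omega)
    | exact h_mem _ (by omega)
    | apply add_mem
    | apply sub_mem
    | apply mul_mem
    | apply pow_mem

lemma mem_of_parameters_eq (hp : 0 < p) (hy : IsGaleRobinson p p p a b c y) (h_ne : ∀ k, y k ≠ 0)
    (ha : a ∈ B) (hb : b ∈ B) (hc : c ∈ B) (h_init : ∀ i < p + p + p, y i ∈ B)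
    (h_inv : ∀ i < p + p + p, (y i)⁻¹ ∈ B) (m : ℕ) : y m ∈ B := by
  have h_ratio_step : ∀ k, y (k + p + 2 * p) / y (k + p) =
      (a + b + c) * (y (k + 2 * p) / y k) := fun k => by
    rw [mul_div_assoc', div_eq_div_iff (h_ne _) (h_ne _)]
    linear_combination (norm := ring_nf) hy k
  have h_ratio : ∀ k, y (k + 2 * p) / y k ∈ B := fun k => by
    induction k using Nat.strong_induction_on with
    | _ k ih =>
    rcases lt_or_ge k p with h_lt | h_ge
    · exact div_eq_mul_inv (y (k + 2 * p)) _ ▸ mul_mem (h_init _ (by lia)) (h_inv _ (by lia))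
    · obtain ⟨l, rfl⟩ := Nat.exists_eq_add_of_le' h_ge
      exact h_ratio_step l ▸ mul_mem (add_mem (add_mem ha hb) hc) (ih l (by lia))
  induction m using Nat.strong_induction_on with
  | _ m ih =>
  rcases lt_or_ge m (2 * p) with h_lt | h_ge
  · exact h_init m (by lia)
  · obtain ⟨k, rfl⟩ := Nat.exists_eq_add_of_le' h_ge
    exact div_mul_cancel₀ (y (k + 2 * p)) (h_ne k) ▸ mul_mem (h_ratio k) (ih k (by lia))

end Field

lemma map_eq_of_mem_range {R S T : Type*} [CommRing R] [CommRing S] [CommRing T] [IsDomain T]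
    (hp : 0 < p) (hq : 0 < q) (hr : 0 < r) {j : R →+* S} (hj : Function.Injective j)
    {φ : R →+* T} {a b c : R} {y : ℕ → S} {z : ℕ → T}
    (hy : IsGaleRobinson p q r (j a) (j b) (j c) y)
    (hz : IsGaleRobinson p q r (φ a) (φ b) (φ c) z) (hz_ne : ∀ k, z k ≠ 0)
    (h_init : ∀ i < p + q + r, ∀ w, j w = y i → φ w = z i) {m : ℕ}
    (h_range : ∀ i ≤ m, y i ∈ j.range) {w : R} (hw : j w = y m) : φ w = z m := by
  induction m using Nat.strong_induction_on generalizing w with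
  | _ m ih =>
  rcases lt_or_ge m (p + q + r) with h_lt | h_ge
  · exact h_init m h_lt w hw
  obtain ⟨k, rfl⟩ := Nat.exists_eq_add_of_le' h_ge
  choose! Y hY using h_range
  have hφ : ∀ i < k + (p + q + r), φ (Y i) = z i := fun i hi =>
    ih i hi (fun l hl => ⟨Y l, hY l (by lia)⟩) (hY i hi.le)
  have h_rec : Y k * w = a * Y (k + p) * Y (k + (q + r)) + b * Y (k + q) * Y (k + (p + r)) +
      c * Y (k + r) * Y (k + (p + q)) := hj <| by
    simp only [map_add, map_mul, hw]
    rw [hY k (by lia), hY (k + p) (by lia), hY (k + q) (by lia), hY (k + r) (by lia),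
      hY (k + (q + r)) (by lia), hY (k + (p + r)) (by lia), hY (k + (p + q)) (by lia), hy k]
  have h_map := congrArg φ h_rec
  simp only [map_add, map_mul] at h_map
  rw [hφ k (by lia), hφ (k + p) (by lia), hφ (k + q) (by lia), hφ (k + r) (by lia),
    hφ (k + (q + r)) (by lia), hφ (k + (p + r)) (by lia), hφ (k + (p + q)) (by lia),
    ← hz k] at h_map
  exact mul_left_cancel₀ (hz_ne k) h_map

end IsGaleRobinson

lemma exists_affine_combination_eq_zero {K : Type*} [Field K] {u v : K} (h : u ≠ v) :
    ∃ a b : K, a + b = 1 ∧ a * u + b * v = 0 := by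
  have h_ne : v - u ≠ 0 := sub_ne_zero.2 h.symm
  exact ⟨v / (v - u), -u / (v - u), by field_simp; ring, by field_simp; ring⟩

lemma exists_galeRobinson_weights {p q r : ℕ} (hp : 0 < p) (hr : 0 < r) (h : ¬ (p = q ∧ q = r)) :
    ∃ a b c : ℚ, a + b + c = 1 ∧
      a * (p * (q + r)) + b * (q * (p + r)) + c * (r * (p + q)) = 0 := by
  rcases not_and_or.1 h with h_pq | h_qr
  · have h_ne : (p * (q + r) : ℚ) ≠ q * (p + r) := by
      norm_cast
      contrapose! h_pq
      exact Nat.eq_of_mul_eq_mul_right hr (by linarith)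
    obtain ⟨a, b, h_sum, h_weight⟩ := exists_affine_combination_eq_zero h_ne
    exact ⟨a, b, 0, by simpa using h_sum, by simpa using h_weight⟩
  · have h_ne : (q * (p + r) : ℚ) ≠ r * (p + q) := by
      norm_cast
      contrapose! h_qr
      exact Nat.eq_of_mul_eq_mul_right hp (by linarith)
    obtain ⟨b, c, h_sum, h_weight⟩ := exists_affine_combination_eq_zero h_ne
    exact ⟨0, b, c, by simpa using h_sum, by simpa using h_weight⟩

/-- A nowhere vanishing solution of the Gale–Robinson recurrence whose coefficients and first
`p + q + r` terms are independent variables: the Laurent ring of these variables embeds by `j`. -/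
structure IsGenericSolution {K : Type*} [Field K] (p q r : ℕ)
    (j : LaurentRing (Fin (p + q + r)) (Fin 3) →+* K) (y : ℕ → K) : Prop where
  injective : Function.Injective j
  init (i : Fin (p + q + r)) : y i = j (LaurentRing.var (Sum.inl i))
  recurrence : IsGaleRobinson p q r (j (LaurentRing.var (Sum.inr 0)))
    (j (LaurentRing.var (Sum.inr 1))) (j (LaurentRing.var (Sum.inr 2))) y
  ne_zero (k : ℕ) : y k ≠ 0

namespace IsGenericSolution

open LaurentRing

variable {K : Type*} [Field K] {p q r : ℕ} {j : LaurentRing (Fin (p + q + r)) (Fin 3) →+* K}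
  {y : ℕ → K}

lemma mem_range_of_lt (hy : IsGenericSolution p q r j y) {i : ℕ} (hi : i < p + q + r) :
    y i ∈ j.range :=
  ⟨var (Sum.inl ⟨i, hi⟩), (hy.init ⟨i, hi⟩).symm⟩

lemma inv_mem_range_of_lt (hy : IsGenericSolution p q r j y) {i : ℕ} (hi : i < p + q + r) :
    (y i)⁻¹ ∈ j.range := by
  obtain ⟨u, hu⟩ := (isUnit_var_inl (τ := Fin 3) (⟨i, hi⟩ : Fin (p + q + r))).exists_right_inv
  refine ⟨u, eq_inv_of_mul_eq_one_right ?_⟩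
  rw [hy.init ⟨i, hi⟩, ← map_mul, hu, map_one]

lemma exists_prime (hy : IsGenericSolution p q r j y) (hp : 0 < p) (hq : 0 < q) (hr : 0 < r) :
    ∃ P, Prime P ∧ j P = y (p + q + r) := by
  let Y (i : ℕ) (hi : i < p + q + r) : LaurentRing (Fin (p + q + r)) (Fin 3) :=
    var (Sum.inl ⟨i, hi⟩)
  have hY : ∀ i hi, j (Y i hi) = y i := fun i hi => (hy.init ⟨i, hi⟩).symm
  have h_prime : Prime (var (Sum.inr 0) * (Y p (by lia) * Y (q + r) (by lia)) +
      (var (Sum.inr 1) * Y q (by lia) * Y (p + r) (by lia) +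
        var (Sum.inr 2) * Y r (by lia) * Y (p + q) (by lia))) := by
    refine prime_var_inr_mul_add ((isUnit_var_inl _).mul (isUnit_var_inl _)) (fun w => ?_)
      fun w => ?_
    · simp [Y]
    · simp [Y, substInr_var_of_ne]
  obtain ⟨u, hu⟩ := (isUnit_var_inl (⟨0, by lia⟩ : Fin (p + q + r))).exists_right_inv
  refine ⟨_, (associated_mul_unit_left _ u (.of_mul_eq_one_right _ hu)).symm.prime h_prime, ?_⟩
  have h_rec := hy.recurrence 0
  have h_unit : y 0 * j u = 1 := by rw [← hY 0 (by lia), ← map_mul, hu, map_one]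
  simp only [zero_add] at h_rec
  simp only [map_mul, map_add, hY]
  linear_combination (-j u) * h_rec + y (p + q + r) * h_unit

lemma exists_mul_prod_pow_mem_range (hy : IsGenericSolution p q r j y) (hp : 0 < p) (hq : 0 < q)
    (hr : 0 < r) (s : ℕ) {m : ℕ} (h_range : ∀ i ≤ m, y i ∈ j.range)
    (h_shift : ∀ i < p + q + r, y (s + i) ∈ j.range) :
    ∃ k, y (s + m) * (∏ i : Fin (p + q + r), y (s + i)) ^ k ∈ j.range := by
  let v : Fin (p + q + r) ⊕ Fin 3 → K :=
    Sum.elim (fun i => y (s + i)) fun t => j (var (Sum.inr t))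
  have hv : ∀ i, IsUnit (v (Sum.inl i)) := fun i => (hy.ne_zero (s + i)).isUnit
  have hv_mem : ∀ t, v t ∈ j.range := by
    rintro (i | t)
    · exact h_shift i i.2
    · exact ⟨_, rfl⟩
  obtain ⟨Y, hY⟩ := h_range m le_rfl
  have h_lift : lift v hv Y = y (s + m) := by
    refine hy.recurrence.map_eq_of_mem_range hp hq hr hy.injective
      (z := fun k => y (s + k)) ?_ (fun k => hy.ne_zero (s + k)) (fun i hi w hw => ?_) h_range hY
    · simp only [lift_var]
      exact hy.recurrence.shift s
    · rw [hy.injective (hw.trans (hy.init ⟨i, hi⟩)), lift_var]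
      rfl
  exact h_lift ▸ exists_lift_mul_prod_pow_mem v hv hv_mem Y

lemma exists_ringHom_eq_sub (hy : IsGenericSolution p q r j y) (hp : 0 < p) (hq : 0 < q)
    (hr : 0 < r) (h : ¬ (p = q ∧ q = r)) :
    ∃ χ : LaurentRing (Fin (p + q + r)) (Fin 3) →+* ℚ, ∀ m, (∀ i ≤ m, y i ∈ j.range) →
      ∀ w, j w = y m → χ w = m - (p + q + r : ℕ) := by
  obtain ⟨a, b, c, h_sum, h_weight⟩ := exists_galeRobinson_weights hp hr h
  let z (k : ℕ) : PowerSeries ℚ :=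
    PowerSeries.X - ((p + q + r : ℕ) : PowerSeries ℚ) + (k : PowerSeries ℚ)
  have hz_const : ∀ k, PowerSeries.constantCoeff (z k) = (k : ℚ) - (p + q + r : ℕ) := fun k => by
    simp only [z, map_add, map_sub, PowerSeries.constantCoeff_X, map_natCast]
    ring
  let v : Fin (p + q + r) ⊕ Fin 3 → PowerSeries ℚ :=
    Sum.elim (fun i => z i) fun t => PowerSeries.C (![a, b, c] t)
  have hv : ∀ i, IsUnit (v (Sum.inl i)) := fun i => by
    rw [PowerSeries.isUnit_iff_constantCoeff, isUnit_iff_ne_zero]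
    change PowerSeries.constantCoeff (z i) ≠ 0
    rw [hz_const, sub_ne_zero]
    exact_mod_cast i.2.ne
  refine ⟨PowerSeries.constantCoeff.comp (lift v hv), fun m h_range w hw => ?_⟩
  rw [RingHom.comp_apply, ← hz_const]
  congr 1
  refine hy.recurrence.map_eq_of_mem_range hp hq hr hy.injective (z := z) ?_ (fun k hk => ?_)
    (fun i hi w hw => ?_) h_range hw
  · simp only [lift_var]
    refine IsGaleRobinson.of_add_natCast ?_ ?_ _
    · simp [v, ← map_add, h_sum]
    · simpa [v] using congrArg (PowerSeries.C (R := ℚ)) h_weight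
  · have h_coeff := congrArg (PowerSeries.coeff 1) hk
    simp only [z, map_add, map_sub, PowerSeries.coeff_one_X, ← map_natCast PowerSeries.C,
      PowerSeries.coeff_C_of_ne_zero one_ne_zero] at h_coeff
    simp at h_coeff
  · rw [hy.injective (hw.trans (hy.init ⟨i, hi⟩)), lift_var]
    rfl

lemma not_dvd (hy : IsGenericSolution p q r j y) (hp : 0 < p) (hq : 0 < q) (hr : 0 < r)
    (h : ¬ (p = q ∧ q = r)) {P Y : LaurentRing (Fin (p + q + r)) (Fin 3)} {i : ℕ} (hi : i ≠ 0)
    (h_range : ∀ l ≤ p + q + r + i, y l ∈ j.range) (hP : j P = y (p + q + r))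
    (hY : j Y = y (p + q + r + i)) : ¬ P ∣ Y := fun h_dvd => by
  obtain ⟨χ, hχ⟩ := hy.exists_ringHom_eq_sub hp hq hr h
  have h_map := map_dvd χ h_dvd
  rw [hχ _ (fun l hl => h_range l (by lia)) P hP, hχ _ h_range Y hY, sub_self, zero_dvd_iff]
    at h_map
  simp [hi] at h_map

lemma exists_mul_pow_mem_range (hy : IsGenericSolution p q r j y) (hp : 0 < p) (hq : 0 < q)
    (hr : 0 < r) {m : ℕ} (hm : p + q + r ≤ m) (h_range : ∀ i ≤ m, y i ∈ j.range) :
    ∃ k, y (1 + m) * y (p + q + r) ^ k ∈ j.range := by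
  obtain ⟨k, hk⟩ := hy.exists_mul_prod_pow_mem_range hp hq hr 1 h_range
    fun i hi => h_range _ (by lia)
  have h_inv : ∏ i ∈ Finset.range (p + q + r), (y i)⁻¹ ∈ j.range :=
    prod_mem fun i hi => hy.inv_mem_range_of_lt (Finset.mem_range.1 hi)
  have h_prod : y (p + q + r) = (∏ i : Fin (p + q + r), y (1 + i)) *
      (y 0 * ∏ i ∈ Finset.range (p + q + r), (y i)⁻¹) := by
    rw [Fin.prod_univ_eq_prod_range fun i => y (1 + i), ← mul_assoc, Finset.prod_inv_distrib,
      eq_mul_inv_iff_mul_eq₀ (Finset.prod_ne_zero_iff.2 fun i _ => hy.ne_zero i), mul_comm,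
      ← Finset.prod_range_succ, Finset.prod_range_succ']
    simp only [add_comm]
  refine ⟨k, ?_⟩
  rw [h_prod, mul_pow, ← mul_assoc]
  exact mul_mem hk (pow_mem (mul_mem (h_range 0 (by lia)) h_inv) k)

lemma mem_range_of_two_mul_lt (hy : IsGenericSolution p q r j y) (hp : 0 < p) (hq : 0 < q)
    (hr : 0 < r) (h : ¬ (p = q ∧ q = r)) {m : ℕ} (hm : 2 * (p + q + r) < m)
    (h_range : ∀ i < m, y i ∈ j.range) : y m ∈ j.range := by
  obtain ⟨P, hP_prime, hP⟩ := hy.exists_prime hp hq hr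
  obtain ⟨k, hk⟩ := hy.exists_mul_pow_mem_range hp hq hr (m := m - 1) (by lia)
    fun i hi => h_range i (by lia)
  obtain ⟨l, hl⟩ := hy.exists_mul_prod_pow_mem_range hp hq hr (p + q + r + 1)
    (m := m - (p + q + r + 1)) (fun i hi => h_range i (by lia)) fun i hi => h_range _ (by lia)
  rw [Nat.add_sub_cancel' (by lia)] at hk hl
  choose! Y hY using h_range
  have h_prod : j (∏ i : Fin (p + q + r), Y (p + q + r + 1 + i)) =
      ∏ i : Fin (p + q + r), y (p + q + r + 1 + i) := by
    rw [map_prod]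
    exact Finset.prod_congr rfl fun i _ => hY _ (by lia)
  refine mem_range_of_mul_pow_mem_range hy.injective hP_prime (fun h_dvd => ?_)
    (hP.symm ▸ hk) (h_prod.symm ▸ hl)
  obtain ⟨i, -, hi⟩ := (hP_prime.dvd_finsetProd_iff _).1 h_dvd
  exact hy.not_dvd hp hq hr h (i := 1 + i) (by lia) (fun l hl => ⟨Y l, hY l (by lia)⟩) hP
    ((hY _ (by lia)).trans (by rw [add_assoc])) hi

theorem mem_range (hy : IsGenericSolution p q r j y) (hp : 0 < p) (hq : 0 < q) (hr : 0 < r)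
    (m : ℕ) : y m ∈ j.range := by
  have h_init : ∀ i < p + q + r, y i ∈ j.range := fun i => hy.mem_range_of_lt
  have h_inv : ∀ i < p + q + r, (y i)⁻¹ ∈ j.range := fun i => hy.inv_mem_range_of_lt
  by_cases h : p = q ∧ q = r
  · obtain ⟨rfl, rfl⟩ := h
    exact hy.recurrence.mem_of_parameters_eq (B := j.range) hp hy.ne_zero ⟨_, rfl⟩ ⟨_, rfl⟩ ⟨_, rfl⟩
      h_init h_inv m
  have h_lt := hy.recurrence.mem_of_lt_two_mul (B := j.range) hp hq hr hy.ne_zero ⟨_, rfl⟩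
    ⟨_, rfl⟩ ⟨_, rfl⟩ h_init h_inv
  induction m using Nat.strong_induction_on with
  | _ m ih =>
  rcases lt_trichotomy m (2 * (p + q + r)) with hm | rfl | hm
  · exact h_lt m hm
  · exact hy.recurrence.mem_two_mul hp hq hr hy.ne_zero ⟨_, rfl⟩ ⟨_, rfl⟩ ⟨_, rfl⟩ h_lt h_inv
  · exact hy.mem_range_of_two_mul_lt hp hq hr h hm ih

end IsGenericSolution

theorem gale_robinson_laurent_general {p q r : ℕ} (hp : 0 < p) (hq : 0 < q) (hr : 0 < r)
    {K : Type*} [Field K] {x : Fin (p + q + r) ⊕ Fin 3 → K} (hx : AlgebraicIndependent ℤ x)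
    {y : ℕ → K} (h_init : ∀ i : Fin (p + q + r), y i = x (Sum.inl i))
    (h_rec : ∀ k, y (k + (p + q + r)) = (x (Sum.inr 0) * y (k + p) * y (k + (q + r)) +
      x (Sum.inr 1) * y (k + q) * y (k + (p + r)) +
      x (Sum.inr 2) * y (k + r) * y (k + (p + q))) / y k) (m : ℕ) :
    y m ∈ Algebra.adjoin ℤ (Set.range (fun i => x (Sum.inl i)) ∪
      Set.range (fun i => (x (Sum.inl i))⁻¹) ∪ Set.range (fun t => x (Sum.inr t))) := by
  have hx_unit : ∀ i, IsUnit (x (Sum.inl i)) := fun i =>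
    ((isPositiveFraction_self (Sum.inl i)).ne_zero hx).isUnit
  have hy_ne : ∀ k, y k ≠ 0 := fun k =>
    (IsPositiveFraction.of_recurrence hx hp hq hr (isPositiveFraction_self _)
      (isPositiveFraction_self _) (isPositiveFraction_self _)
      (fun i hi => h_init ⟨i, hi⟩ ▸ isPositiveFraction_self _) h_rec k).ne_zero hx
  have hy : IsGenericSolution p q r (LaurentRing.lift x hx_unit) y :=
    { injective := LaurentRing.lift_injective x hx_unit hx
      init := fun i => by rw [h_init, LaurentRing.lift_var]
      recurrence := fun k => by
        simp only [LaurentRing.lift_var, h_rec k, mul_div_cancel₀ _ (hy_ne k)]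
      ne_zero := hy_ne }
  obtain ⟨Y, hY⟩ := hy.mem_range hp hq hr m
  exact hY ▸ LaurentRing.lift_mem_adjoin x hx_unit Y

/-- The three-term Gale–Robinson recurrence exhibits the Laurent phenomenon
over ℤ[α,β,γ]. -/
theorem gale_robinson_laurent
    (p q r : ℕ) (hp : 0 < p) (hq : 0 < q) (hr : 0 < r)
    (hpq : p ≠ q) (hpr : p ≠ r) (hqr : q ≠ r)
    (n : ℕ) (hn : n = p + q + r)
    (F : Type*) [Field F] [Algebra (MvPolynomial (Fin n ⊕ Fin 3) ℤ) F]
    [IsFractionRing (MvPolynomial (Fin n ⊕ Fin 3) ℤ) F]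
    (x : Fin n ⊕ Fin 3 → F)
    (hx : ∀ s, x s = algebraMap (MvPolynomial (Fin n ⊕ Fin 3) ℤ) F (X s))
    (α β γ : F) (hα : α = x (Sum.inr 0)) (hβ : β = x (Sum.inr 1)) (hγ : γ = x (Sum.inr 2))
    (y : ℕ → F)
    (hinit : ∀ i : Fin n, y i = x (Sum.inl i))
    (hrec : ∀ k : ℕ,
      y (k + n) = (α * y (k + p) * y (k + (n - p)) + β * y (k + q) * y (k + (n - q))
        + γ * y (k + r) * y (k + (n - r))) / y k) :
    ∀ m : ℕ, y m ∈ Algebra.adjoin ℤ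
      (Set.range (fun i : Fin n => x (Sum.inl i)) ∪
       Set.range (fun i : Fin n => (x (Sum.inl i))⁻¹) ∪ {α, β, γ}) := by
  intro m
  subst hn hα hβ hγ
  have hx_indep : AlgebraicIndependent ℤ x := by
    rw [funext hx]
    exact (algebraicIndependent_X _ ℤ).map' (f := IsScalarTower.toAlgHom ℤ _ F)
      (IsFractionRing.injective _ F)
  have h_coeffs : Set.range (fun t : Fin 3 => x (Sum.inr t)) =
      {x (Sum.inr 0), x (Sum.inr 1), x (Sum.inr 2)} := by
    ext
    simp [Fin.exists_fin_succ, eq_comm]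
  have h_sub : p + q + r - p = q + r ∧ p + q + r - q = p + r ∧ p + q + r - r = p + q := by lia
  simp only [h_sub] at hrec
  exact h_coeffs ▸ gale_robinson_laurent_general hp hq hr hx_indep hinit hrec m
end

section
/- Let y : ℤ≥0³ → F, where F is the field of rational functions over ℤ[α,β,γ] in indeterminates y_{a,b,c} indexed by triples (a,b,c) ∈ ℤ≥0³ with abc = 0, be defined by the cube recurrence y_{i,j,k} = (α y_{i−1,j,k} y_{i,j−1,k−1} + β y_{i,j−1,k} y_{i−1,j,k−1} + γ y_{i,j,k−1} y_{i−1,j−1,k}) / y_{i−1,j−1,k−1} for i,j,k ≥ 1, with initial values the indeterminates. Then every y_{i,j,k} is a Laurent polynomial in the initial variables with coefficients in ℤ[α,β,γ]. -/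
open MvPolynomial

/-- Index set for the initial cluster of the cube recurrence on ℤ≥0³:
triples with at least one coordinate equal to zero. -/
def CubeInit : Type := {p : ℕ × ℕ × ℕ // p.1 = 0 ∨ p.2.1 = 0 ∨ p.2.2 = 0}

/-!
Let `A` be the polynomial ring over `ℤ` in all the indeterminates and let `y` be the generic
solution. As `A` is factorial, `y i j k` is a Laurent polynomial as soon as it lies in the
localization `O` of `A` at every prime element `p` dividing no initial entry. Argue by induction on
`i` and fix such a `p`. A solution without zeros whose parameters lie in `O` and whose initial
entries are units of `O` is a specialization of the generic one, so the Laurent property of the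
layers before `i`, once known, keeps those layers of any such solution inside `O`.

* If the entries `y 1 j k` are units of `O`, restart the recurrence from the first layer.
* Otherwise `p` divides some `y 1 j k` in `O`. If an entry divisible by `p` involves an initial
  entry absent from `p`, then adding `1` to the latter keeps the former divisible by `p`, while
  moving it by a power of `β` or `γ` times a quotient of entries of the layer below. This shows that
  `p` divides neither `β` nor `γ`, nor any `y 2 j k`. Moreover `y 2 j k` lies in `O`: the ratio of
  two consecutive layers satisfies a discrete Moutard equation, whose transformation theory
  expresses `γ * y 2 j k` through two solutions with values in `O`. So the recurrence can be
  restarted from the second layer.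
-/

section CubeRecurrence

variable {K : Type*} [Field K]

/-- The cube recurrence with parameters `α`, `β`, `γ`, in the division form of the theorem; where
`y i j k = 0`, the division makes it say `y (i + 1) (j + 1) (k + 1) = 0`. -/
def CubeRecurrence (α β γ : K) (y : ℕ → ℕ → ℕ → K) : Prop :=
  ∀ i j k : ℕ,
    y (i + 1) (j + 1) (k + 1) =
      (α * y i (j + 1) (k + 1) * y (i + 1) j k
        + β * y (i + 1) j (k + 1) * y i (j + 1) k
        + γ * y (i + 1) (j + 1) k * y i j (k + 1)) / y i j k

/-- The parameters lie in the subring `O` and the entries on the boundary of the octant are units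
of `O`. The conclusion aimed at is that `O` then contains all the entries. -/
structure HasUnitInitialData (O : Subring K) (α β γ : K) (y : ℕ → ℕ → ℕ → K) : Prop where
  α_mem : α ∈ O
  β_mem : β ∈ O
  γ_mem : γ ∈ O
  init_mem : ∀ {i j k}, i = 0 ∨ j = 0 ∨ k = 0 → y i j k ∈ O
  init_inv_mem : ∀ {i j k}, i = 0 ∨ j = 0 ∨ k = 0 → (y i j k)⁻¹ ∈ O

theorem octant_induction {P : ℕ → ℕ → ℕ → Prop}
    (boundary : ∀ i j k, i = 0 ∨ j = 0 ∨ k = 0 → P i j k)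
    (step : ∀ i j k, P i (j + 1) (k + 1) → P (i + 1) j k → P (i + 1) j (k + 1) →
      P i (j + 1) k → P (i + 1) (j + 1) k → P i j (k + 1) → P i j k →
      P (i + 1) (j + 1) (k + 1)) (i j k : ℕ) : P i j k := by
  induction i generalizing j k with
  | zero => exact boundary _ _ _ (by simp)
  | succ i ihi =>
    induction j generalizing k with
    | zero => exact boundary _ _ _ (by simp)
    | succ j ihj =>
      induction k with
      | zero => exact boundary _ _ _ (by simp)
      | succ k ihk =>
        exact step i j k (ihi _ _) (ihj _) (ihj _) (ihi _ _) ihk (ihi _ _) (ihi _ _)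

section Moutard

variable {α β γ : K} {q f t s : ℕ → ℕ → K} {O : Subring K}

/-- The discrete Moutard equation with potential `q`. It is linear, and the ratio of two consecutive
layers of the cube recurrence satisfies it. -/
def IsMoutard (α β γ : K) (q f : ℕ → ℕ → K) : Prop :=
  ∀ j k, f (j + 1) (k + 1) = α * f j k + q j k * (β * f j (k + 1) + γ * f (j + 1) k)

/-- The Moutard transformation by a solution `t`: with denominators cleared, `s / t` solves the
Moutard equation with potential
`q j k * t (j + 1) k * t j (k + 1) / (t j k * t (j + 1) (k + 1))`. -/
def IsMoutardTransform (α β γ : K) (q t s : ℕ → ℕ → K) : Prop :=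
  ∀ j k, s (j + 1) (k + 1) * t j k = α * t (j + 1) (k + 1) * s j k +
    q j k * (β * s j (k + 1) * t (j + 1) k + γ * s (j + 1) k * t j (k + 1))

/-- The solution of the Moutard equation with potential `q` whose transform by `t` is `s`. The
values on the axes are those which make `moutardPartner_link` true there. -/
noncomputable def moutardPartner (α β γ : K) (q t s : ℕ → ℕ → K) : ℕ → ℕ → K
  | 0, 0 => 0
  | j + 1, 0 => (t (j + 1) 0 * moutardPartner α β γ q t s j 0
      - γ * s (j + 1) 0 - α * β * s j 0) / t j 0
  | 0, k + 1 => (t 0 (k + 1) * moutardPartner α β γ q t s 0 k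
      + β * s 0 (k + 1) + α * γ * s 0 k) / t 0 k
  | j + 1, k + 1 => α * moutardPartner α β γ q t s j k +
      q j k * (β * moutardPartner α β γ q t s j (k + 1)
        + γ * moutardPartner α β γ q t s (j + 1) k)

theorem isMoutard_moutardPartner : IsMoutard α β γ q (moutardPartner α β γ q t s) :=
  fun j k => by rw [moutardPartner]

/-- The difference equation by which `s` is a potential for the pair of solutions `t` and `p`,
across the edge from `(j, k)` to `(j + 1, k)`. -/
def LinkFst (α β γ : K) (t s p : ℕ → ℕ → K) (j k : ℕ) : Prop :=
  γ * s (j + 1) k + α * β * s j k = t (j + 1) k * p j k - t j k * p (j + 1) k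

/-- The counterpart of `LinkFst` for the edge from `(j, k)` to `(j, k + 1)`. -/
def LinkSnd (α β γ : K) (t s p : ℕ → ℕ → K) (j k : ℕ) : Prop :=
  β * s j (k + 1) + α * γ * s j k = t j k * p j (k + 1) - t j (k + 1) * p j k

theorem IsMoutardTransform.link_step {p : ℕ → ℕ → K} (hs : IsMoutardTransform α β γ q t s)
    (ht : IsMoutard α β γ q t) (hp : IsMoutard α β γ q p) {j k : ℕ} (ht0 : t j k ≠ 0)
    (h₁ : LinkFst α β γ t s p j k) (h₂ : LinkSnd α β γ t s p j k) :
    LinkFst α β γ t s p j (k + 1) ∧ LinkSnd α β γ t s p (j + 1) k := by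
  unfold LinkFst LinkSnd at *
  have s_diag : s (j + 1) (k + 1) =
      α ^ 2 * s j k + q j k * (t (j + 1) k * p j (k + 1) - t j (k + 1) * p (j + 1) k) := by
    apply mul_right_cancel₀ ht0
    rw [hs, ht]
    linear_combination q j k * t (j + 1) k * h₂ + q j k * t j (k + 1) * h₁
  rw [s_diag, ht, hp]
  exact ⟨by linear_combination α * h₂, by linear_combination α * h₁⟩

theorem forall_and_of_axes_of_step {P Q : ℕ → ℕ → Prop} (hP : ∀ j, P j 0) (hQ : ∀ k, Q 0 k)
    (step : ∀ j k, P j k → Q j k → P j (k + 1) ∧ Q (j + 1) k) (j k : ℕ) : P j k ∧ Q j k := by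
  induction j generalizing k with
  | zero =>
    induction k with
    | zero => exact ⟨hP 0, hQ 0⟩
    | succ k ih => exact ⟨(step 0 k ih.1 ih.2).1, hQ _⟩
  | succ j ihj =>
    have hQj (k : ℕ) : Q (j + 1) k := (step j k (ihj k).1 (ihj k).2).2
    induction k with
    | zero => exact ⟨hP _, hQj 0⟩
    | succ k ih => exact ⟨(step (j + 1) k ih.1 ih.2).1, hQj _⟩

theorem IsMoutardTransform.moutardPartner_link (hs : IsMoutardTransform α β γ q t s)
    (ht : IsMoutard α β γ q t) (ht0 : ∀ j k, t j k ≠ 0) (j k : ℕ) :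
    LinkFst α β γ t s (moutardPartner α β γ q t s) j k ∧
      LinkSnd α β γ t s (moutardPartner α β γ q t s) j k := by
  refine forall_and_of_axes_of_step (fun j => ?_) (fun k => ?_)
    (fun j k => hs.link_step ht isMoutard_moutardPartner (ht0 j k)) j k
  · rw [LinkFst, moutardPartner, mul_div_cancel₀ _ (ht0 j 0)]
    ring
  · rw [LinkSnd, moutardPartner.eq_3, mul_div_cancel₀ _ (ht0 0 k)]
    ring

theorem moutardPartner_mem (hα : α ∈ O) (hβ : β ∈ O) (hγ : γ ∈ O) (hq : ∀ j k, q j k ∈ O)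
    (ht : ∀ j k, t j k ∈ O) (ht_inv : ∀ j k, j = 0 ∨ k = 0 → (t j k)⁻¹ ∈ O)
    (hs : ∀ j k, j = 0 ∨ k = 0 → s j k ∈ O) (j k : ℕ) :
    moutardPartner α β γ q t s j k ∈ O := by
  fun_induction moutardPartner α β γ q t s j k with
  | case1 => exact O.zero_mem
  | case2 j ih =>
    rw [div_eq_mul_inv]
    exact O.mul_mem (O.sub_mem (O.sub_mem (O.mul_mem (ht _ _) ih)
      (O.mul_mem hγ (hs _ _ (.inr rfl)))) (O.mul_mem (O.mul_mem hα hβ) (hs _ _ (.inr rfl))))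
      (ht_inv _ _ (.inr rfl))
  | case3 k ih =>
    rw [div_eq_mul_inv]
    exact O.mul_mem (O.add_mem (O.add_mem (O.mul_mem (ht _ _) ih)
      (O.mul_mem hβ (hs _ _ (.inl rfl)))) (O.mul_mem (O.mul_mem hα hγ) (hs _ _ (.inl rfl))))
      (ht_inv _ _ (.inl rfl))
  | case4 j k ih ih₂ ih₁ =>
    exact O.add_mem (O.mul_mem hα ih)
      (O.mul_mem (hq _ _) (O.add_mem (O.mul_mem hβ ih₂) (O.mul_mem hγ ih₁)))

theorem IsMoutardTransform.mem (hst : IsMoutardTransform α β γ q t s) (htq : IsMoutard α β γ q t)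
    (ht0 : ∀ j k, t j k ≠ 0) (hα : α ∈ O) (hβ : β ∈ O) (hγ : γ ∈ O) (hγ_inv : γ⁻¹ ∈ O)
    (hγ0 : γ ≠ 0) (hq : ∀ j k, q j k ∈ O) (ht : ∀ j k, t j k ∈ O)
    (ht_inv : ∀ j k, j = 0 ∨ k = 0 → (t j k)⁻¹ ∈ O) (hs : ∀ j k, j = 0 ∨ k = 0 → s j k ∈ O)
    (j k : ℕ) : s j k ∈ O := by
  induction j with
  | zero => exact hs _ _ (.inl rfl)
  | succ j ih =>
    have hp := moutardPartner_mem hα hβ hγ hq ht ht_inv hs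
    have link : γ * s (j + 1) k ∈ O := by
      rw [eq_sub_of_add_eq (hst.moutardPartner_link htq ht0 j k).1]
      exact O.sub_mem (O.sub_mem (O.mul_mem (ht _ _) (hp _ _)) (O.mul_mem (ht _ _) (hp _ _)))
        (O.mul_mem (O.mul_mem hα hβ) ih)
    simpa only [inv_mul_cancel_left₀ hγ0] using O.mul_mem hγ_inv link

end Moutard

namespace CubeRecurrence

variable {α β γ : K} {y : ℕ → ℕ → ℕ → K} {O : Subring K}

theorem mul_eq (h : CubeRecurrence α β γ y) {i j k : ℕ} (hne : y i j k ≠ 0) :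
    y (i + 1) (j + 1) (k + 1) * y i j k =
      α * y i (j + 1) (k + 1) * y (i + 1) j k
        + β * y (i + 1) j (k + 1) * y i (j + 1) k
        + γ * y (i + 1) (j + 1) k * y i j (k + 1) := by
  rw [h i j k, div_mul_cancel₀ _ hne]

theorem shift (h : CubeRecurrence α β γ y) (n : ℕ) :
    CubeRecurrence α β γ fun i j k => y (i + n) j k := fun i j k => by
  simpa only [Nat.add_right_comm i 1 n] using h (i + n) j k

theorem swap (h : CubeRecurrence α β γ y) : CubeRecurrence α γ β fun i j k => y i k j :=
  fun i j k => by
    dsimp only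
    rw [h i k j]
    ring

theorem mem_subfield (h : CubeRecurrence α β γ y) {S : Subfield K} (hα : α ∈ S) (hβ : β ∈ S)
    (hγ : γ ∈ S) (i j k : ℕ)
    (hinit : ∀ a b c, a = 0 ∨ b = 0 ∨ c = 0 → a ≤ i → b ≤ j → c ≤ k → y a b c ∈ S) :
    y i j k ∈ S := by
  induction i, j, k using octant_induction with
  | boundary i j k hijk => exact hinit i j k hijk le_rfl le_rfl le_rfl
  | step i j k h₁ h₂ h₃ h₄ h₅ h₆ h₇ =>
    have descend {i' j' k' : ℕ} (hi : i' ≤ i + 1) (hj : j' ≤ j + 1) (hk : k' ≤ k + 1)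
        (ih : (∀ a b c, a = 0 ∨ b = 0 ∨ c = 0 → a ≤ i' → b ≤ j' → c ≤ k' → y a b c ∈ S) →
          y i' j' k' ∈ S) : y i' j' k' ∈ S :=
      ih fun a b c habc ha hb hc => hinit a b c habc (ha.trans hi) (hb.trans hj) (hc.trans hk)
    rw [h]
    refine S.div_mem (S.add_mem (S.add_mem (S.mul_mem (S.mul_mem hα ?_) ?_)
      (S.mul_mem (S.mul_mem hβ ?_) ?_)) (S.mul_mem (S.mul_mem hγ ?_) ?_)) ?_ <;>
    exact descend (by omega) (by omega) (by omega) ‹_›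

theorem layer_one_mem (h : CubeRecurrence α β γ y) (hO : HasUnitInitialData O α β γ y)
    (j k : ℕ) : y 1 j k ∈ O := by
  suffices ∀ i j k, i ≤ 1 → y i j k ∈ O from this 1 j k le_rfl
  intro i j k
  induction i, j, k using octant_induction with
  | boundary i j k hijk => exact fun _ => hO.init_mem hijk
  | step i j k _ h₂ h₃ _ h₅ _ _ =>
    intro hi
    obtain rfl : i = 0 := by omega
    have layer_zero (j k : ℕ) : y 0 j k ∈ O := hO.init_mem (.inl rfl)
    rw [h, div_eq_mul_inv]
    exact O.mul_mem (O.add_mem (O.add_mem (O.mul_mem (O.mul_mem hO.α_mem (layer_zero _ _)) (h₂ hi))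
      (O.mul_mem (O.mul_mem hO.β_mem (h₃ hi)) (layer_zero _ _)))
      (O.mul_mem (O.mul_mem hO.γ_mem (h₅ hi)) (layer_zero _ _))) (hO.init_inv_mem (.inl rfl))

/-- The potential for which the ratio of the layers `0` and `1` solves the Moutard equation. -/
noncomputable def potential (y : ℕ → ℕ → ℕ → K) (j k : ℕ) : K :=
  y 0 (j + 1) k * y 0 j (k + 1) / (y 0 j k * y 0 (j + 1) (k + 1))

theorem isMoutard_ratio (h : CubeRecurrence α β γ y) (hne : ∀ i j k, y i j k ≠ 0) :
    IsMoutard α β γ (potential y) fun j k => y 1 j k / y 0 j k := fun j k => by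
  have layer_one : y 1 (j + 1) (k + 1) = _ := h 0 j k
  dsimp only
  rw [layer_one, potential]
  field_simp [hne]
  ring

theorem isMoutardTransform_ratio (h : CubeRecurrence α β γ y) (hne : ∀ i j k, y i j k ≠ 0) :
    IsMoutardTransform α β γ (potential y) (fun j k => y 1 j k / y 0 j k)
      (fun j k => y 2 j k / y 0 j k) := fun j k => by
  have layer_two : y 2 (j + 1) (k + 1) = _ := h 1 j k
  dsimp only
  rw [layer_two, potential]
  field_simp [hne]
  ring

theorem layer_two_mem (h : CubeRecurrence α β γ y) (hne : ∀ i j k, y i j k ≠ 0)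
    (hO : HasUnitInitialData O α β γ y) (hγ0 : γ ≠ 0) (hγ_inv : γ⁻¹ ∈ O) (j k : ℕ) :
    y 2 j k ∈ O := by
  have mem_zero (j k : ℕ) : y 0 j k ∈ O := hO.init_mem (.inl rfl)
  have inv_mem_zero (j k : ℕ) : (y 0 j k)⁻¹ ∈ O := hO.init_inv_mem (.inl rfl)
  have ratio_mem : y 2 j k / y 0 j k ∈ O := by
    refine (h.isMoutardTransform_ratio hne).mem (h.isMoutard_ratio hne)
      (fun j k => div_ne_zero (hne _ _ _) (hne _ _ _)) hO.α_mem hO.β_mem hO.γ_mem hγ_inv hγ0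
      (fun j k => ?_) (fun j k => ?_) (fun j k hjk => ?_) (fun j k hjk => ?_) j k
    · rw [potential, div_eq_mul_inv, mul_inv]
      exact O.mul_mem (O.mul_mem (mem_zero _ _) (mem_zero _ _))
        (O.mul_mem (inv_mem_zero _ _) (inv_mem_zero _ _))
    · rw [div_eq_mul_inv]
      exact O.mul_mem (h.layer_one_mem hO j k) (inv_mem_zero j k)
    · rw [inv_div, div_eq_mul_inv]
      exact O.mul_mem (mem_zero j k) (hO.init_inv_mem (.inr hjk))
    · rw [div_eq_mul_inv]
      exact O.mul_mem (hO.init_mem (.inr hjk)) (inv_mem_zero j k)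
  simpa only [div_mul_cancel₀ _ (hne 0 j k)] using O.mul_mem ratio_mem (mem_zero j k)

-- To be read with `T` changing only the initial entry at `(i + 1, j + 1, 0)`.
theorem map_sub_self_eq (h : CubeRecurrence α β γ y) {i j : ℕ} (hne : ∀ k, y i j k ≠ 0)
    (T : K →+* K) (hα : T α = α) (hβ : T β = β) (hγ : T γ = γ)
    (hi : ∀ a b, T (y i a b) = y i a b) (hj : ∀ b, T (y (i + 1) j b) = y (i + 1) j b) (k : ℕ) :
    T (y (i + 1) (j + 1) k) - y (i + 1) (j + 1) k =
      γ ^ k * y i j k / y i j 0 * (T (y (i + 1) (j + 1) 0) - y (i + 1) (j + 1) 0) := by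
  induction k with
  | zero => rw [pow_zero, one_mul, div_self (hne 0), one_mul]
  | succ k ih =>
    have propagate : T (y (i + 1) (j + 1) (k + 1)) - y (i + 1) (j + 1) (k + 1) =
        γ * (T (y (i + 1) (j + 1) k) - y (i + 1) (j + 1) k) * y i j (k + 1) / y i j k := by
      rw [h i j k]
      simp only [map_div₀, map_add, map_mul, hα, hβ, hγ, hi, hj]
      ring
    rw [propagate, ih]
    field_simp [hne k]
    ring

end CubeRecurrence

namespace HasUnitInitialData

variable {α β γ : K} {y : ℕ → ℕ → ℕ → K} {O : Subring K}

theorem shift (hO : HasUnitInitialData O α β γ y) {n : ℕ}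
    (hn : ∀ j k, y n j k ∈ O ∧ (y n j k)⁻¹ ∈ O) :
    HasUnitInitialData O α β γ fun i j k => y (i + n) j k where
  α_mem := hO.α_mem
  β_mem := hO.β_mem
  γ_mem := hO.γ_mem
  init_mem := by
    rintro i j k (rfl | hjk)
    · simpa only [zero_add] using (hn j k).1
    · exact hO.init_mem (.inr hjk)
  init_inv_mem := by
    rintro i j k (rfl | hjk)
    · simpa only [zero_add] using (hn j k).2
    · exact hO.init_inv_mem (.inr hjk)

end HasUnitInitialData

end CubeRecurrence

section UniqueFactorization

variable {A : Type*} [CommRing A] [UniqueFactorizationMonoid A]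

theorem exists_mem_dvd_of_forall_prime_dvd {M : Submonoid A} {b : A} (hb : b ≠ 0)
    (h : ∀ p, Prime p → p ∣ b → ∃ m ∈ M, p ∣ m) : ∃ m ∈ M, b ∣ m := by
  induction b using UniqueFactorizationMonoid.induction_on_prime with
  | h₁ => exact absurd rfl hb
  | h₂ u hu => exact ⟨1, M.one_mem, hu.dvd⟩
  | h₃ b p hb0 hp ih =>
    obtain ⟨m, hm, hbm⟩ := ih hb0 fun q hq hqb => h q hq (hqb.mul_left p)
    obtain ⟨n, hn, hpn⟩ := h p hp (dvd_mul_right p b)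
    exact ⟨n * m, M.mul_mem hn hm, mul_dvd_mul hpn hbm⟩

variable [IsDomain A] (F : Type*) [Field F] [Algebra A F] [IsFractionRing A F] {p : A}

/-- The localization at a prime element of a unique factorization domain, as a valuation subring of
the fraction field. -/
noncomputable def primeValuationSubring (hp : Prime p) : ValuationSubring F :=
  haveI : (Ideal.span {p}).IsPrime := (Ideal.span_singleton_prime hp.ne_zero).2 hp
  ValuationSubring.ofSubring (Localization.subalgebra.ofField F (Ideal.span {p}).primeCompl
      (Ideal.primeCompl_le_nonZeroDivisors _)).toSubring fun z => by
    obtain ⟨a, b, hab, rfl⟩ := IsFractionRing.exists_reduced_fraction (A := A) z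
    simp only [IsFractionRing.mk'_eq_div]
    by_cases hpb : p ∣ b
    · have hpa : ¬ p ∣ a := fun hpa => hp.not_isUnit (hab hpa hpb)
      exact .inr ⟨b, a, by simpa [Ideal.primeCompl, Ideal.mem_span_singleton] using hpa, by
        rw [inv_div, div_eq_mul_inv]⟩
    · exact .inl ⟨a, b, by simpa [Ideal.primeCompl, Ideal.mem_span_singleton] using hpb,
        div_eq_mul_inv _ _⟩

/-- The `p`-adic valuation of the fraction field, in multiplicative notation: `p` divides `a` if and
only if the valuation of `a` is less than `1`. -/
noncomputable abbrev primeValuation (hp : Prime p) :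
    Valuation F (primeValuationSubring F hp).ValueGroup :=
  (primeValuationSubring F hp).valuation

variable {F}

theorem primeValuation_le_one_iff (hp : Prime p) {z : F} :
    primeValuation F hp z ≤ 1 ↔ z ∈ primeValuationSubring F hp :=
  ValuationSubring.valuation_le_one_iff _ _

theorem mem_primeValuationSubring_iff (hp : Prime p) {z : F} :
    z ∈ primeValuationSubring F hp ↔
      ∃ a b : A, ¬ p ∣ b ∧ z = algebraMap A F a / algebraMap A F b := by
  have mem_primeCompl (b : A) : b ∈ @Ideal.primeCompl A _ (Ideal.span {p})
      ((Ideal.span_singleton_prime hp.ne_zero).2 hp) ↔ ¬ p ∣ b := by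
    simp [Ideal.primeCompl, Ideal.mem_span_singleton]
  simp only [div_eq_mul_inv, ← mem_primeCompl, ← exists_prop]
  exact Iff.rfl

theorem algebraMap_mem_primeValuationSubring (hp : Prime p) (a : A) :
    algebraMap A F a ∈ primeValuationSubring F hp :=
  (mem_primeValuationSubring_iff hp).2
    ⟨a, 1, hp.not_dvd_one, by rw [map_one, div_one]⟩

theorem primeValuation_algebraMap_lt_one_iff (hp : Prime p) {a : A} :
    primeValuation F hp (algebraMap A F a) < 1 ↔ p ∣ a := by
  obtain rfl | ha := eq_or_ne a 0
  · simp
  have ha' : algebraMap A F a ≠ 0 := (map_ne_zero_iff _ (IsFractionRing.injective A F)).2 ha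
  rw [← not_iff_not, not_lt, ← inv_le_one₀ (by simpa [zero_lt_iff] using ha), ← map_inv₀,
    primeValuation_le_one_iff, mem_primeValuationSubring_iff]
  constructor
  · rintro ⟨c, b, hpb, hcb⟩ hpa
    have hb : algebraMap A F b ≠ 0 := (map_ne_zero_iff _ (IsFractionRing.injective A F)).2
      fun hb => hpb (hb ▸ dvd_zero p)
    rw [eq_div_iff hb, inv_mul_eq_iff_eq_mul₀ ha', ← map_mul] at hcb
    exact hpb (IsFractionRing.injective A F hcb ▸ hpa.mul_right c)
  · exact fun hpa => ⟨1, a, hpa, by rw [map_one, one_div]⟩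

theorem primeValuation_algebraMap_eq_one (hp : Prime p) {a : A} (ha : ¬ p ∣ a) :
    primeValuation F hp (algebraMap A F a) = 1 :=
  le_antisymm ((primeValuation_le_one_iff _).2
    (algebraMap_mem_primeValuationSubring hp a))
    (not_lt.1 (mt (primeValuation_algebraMap_lt_one_iff hp).1 ha))

theorem primeValuation_lt_one_iff (hp : Prime p) {z : F} :
    primeValuation F hp z < 1 ↔
      ∃ a b : A, p ∣ a ∧ ¬ p ∣ b ∧ z = algebraMap A F a / algebraMap A F b := by
  constructor
  · intro hz
    obtain ⟨a, b, hpb, rfl⟩ := (mem_primeValuationSubring_iff hp).1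
      ((primeValuation_le_one_iff _).1 hz.le)
    rw [map_div₀, primeValuation_algebraMap_eq_one hp hpb, div_one,
      primeValuation_algebraMap_lt_one_iff] at hz
    exact ⟨a, b, hz, hpb, rfl⟩
  · rintro ⟨a, b, hpa, hpb, rfl⟩
    rwa [map_div₀, primeValuation_algebraMap_eq_one hp hpb, div_one,
      primeValuation_algebraMap_lt_one_iff]

theorem primeValuation_ringEquivOfRingEquiv_lt_one (hp : Prime p) {e : A ≃+* A} (hep : e p = p)
    {z : F} (hz : primeValuation F hp z < 1) :
    primeValuation F hp
      ((IsFractionRing.ringEquivOfRingEquiv e : F ≃+* F) z) < 1 := by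
  rw [primeValuation_lt_one_iff] at hz ⊢
  obtain ⟨a, b, hpa, hpb, rfl⟩ := hz
  refine ⟨e a, e b, hep ▸ map_dvd e hpa, fun h => hpb ?_, ?_⟩
  · rwa [← map_dvd_iff e, hep]
  · simp only [map_div₀, IsFractionRing.ringEquivOfRingEquiv_algebraMap]

theorem mem_ofField_of_forall_prime {M : Submonoid A} (hM : M ≤ nonZeroDivisors A) {z : F}
    (h : ∀ p (hp : Prime p), (∀ m ∈ M, ¬ p ∣ m) → z ∈ primeValuationSubring F hp) :
    z ∈ Localization.subalgebra.ofField F M hM := by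
  obtain ⟨a, b, hab, rfl⟩ := IsFractionRing.exists_reduced_fraction (A := A) z
  have hb : algebraMap A F b ≠ 0 :=
    (map_ne_zero_iff _ (IsFractionRing.injective A F)).2 (nonZeroDivisors.ne_zero b.2)
  rw [IsFractionRing.mk'_eq_div] at h ⊢
  have dvd_of_prime_dvd (p : A) (hp : Prime p) (hpb : p ∣ b) : ∃ m ∈ M, p ∣ m := by
    by_contra! hpM
    have hz := (primeValuation_le_one_iff _).2 (h p hp hpM)
    have hpa : p ∣ a := by
      rw [← primeValuation_algebraMap_lt_one_iff (F := F) hp,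
        ← div_mul_cancel₀ (algebraMap A F a) hb, map_mul]
      exact (mul_le_of_le_one_left' hz).trans_lt ((primeValuation_algebraMap_lt_one_iff hp).2 hpb)
    exact hp.not_isUnit (hab hpa hpb)
  obtain ⟨_, hm, c, rfl⟩ :=
    exists_mem_dvd_of_forall_prime_dvd (nonZeroDivisors.ne_zero b.2) dvd_of_prime_dvd
  have hc : algebraMap A F c ≠ 0 := (map_ne_zero_iff _ (IsFractionRing.injective A F)).2
    (right_ne_zero_of_mul (nonZeroDivisors.ne_zero (hM hm)))
  refine ⟨a * c, b * c, hm, ?_⟩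
  rw [map_mul, map_mul, ← div_eq_mul_inv, mul_div_mul_right _ _ hc]

end UniqueFactorization

section FreeVariable

variable {σ R : Type*} [CommRing R]

theorem mem_supported_of_dvd [IsDomain R] {S : Set σ} {p q : MvPolynomial σ R}
    (hq : q ∈ supported R S) (hq0 : q ≠ 0) (hpq : p ∣ q) : p ∈ supported R S := by
  obtain ⟨r, rfl⟩ := hpq
  refine mem_supported.2 fun s hs => mem_supported.1 hq ?_
  rw [Finset.mem_coe, mem_vars_iff_degreeOf_ne_zero] at hs ⊢
  rw [degreeOf_mul_eq (left_ne_zero_of_mul hq0) (right_ne_zero_of_mul hq0)]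
  exact (Nat.add_pos_left (Nat.pos_of_ne_zero hs) _).ne'

/-- The automorphism of a polynomial ring which adds `1` to the variable `s`. -/
noncomputable def translateVar (R : Type*) [CommRing R] (s : σ) :
    MvPolynomial σ R ≃ₐ[R] MvPolynomial σ R :=
  open scoped Classical in
  let f (c : R) : MvPolynomial σ R →ₐ[R] MvPolynomial σ R :=
    aeval fun t => X t + C ((Pi.single s c : σ → R) t)
  have comp_neg (c : R) : (f c).comp (f (-c)) = AlgHom.id R _ := by
    ext t : 1
    simp [f, Pi.single_neg]
  AlgEquiv.ofAlgHom (f 1) (f (-1)) (comp_neg 1) (by simpa using comp_neg (-1))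

theorem translateVar_X_self (s : σ) : translateVar R s (X s) = X s + 1 := by
  simp [translateVar]

theorem translateVar_eq_self {s : σ} {p : MvPolynomial σ R} (hp : p ∈ supported R {s}ᶜ) :
    translateVar R s p = p := by
  suffices supported R {s}ᶜ ≤ AlgHom.equalizer
      (translateVar R s : MvPolynomial σ R →ₐ[R] _) (AlgHom.id R _) from this hp
  rw [supported, Algebra.adjoin_le_iff]
  rintro _ ⟨t, ht, rfl⟩
  classical simp [translateVar, Pi.single_eq_of_ne ht]

section FractionField

variable (R) (F : Type*) [Field F] [Algebra (MvPolynomial σ R) F]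

/-- The subfield of the field of rational functions consisting of those which do not involve the
variable `s`. -/
def varFree (s : σ) : Subfield F :=
  Subfield.closure (algebraMap (MvPolynomial σ R) F '' supported R {s}ᶜ)

variable {R F} {s t : σ} {z : F}

theorem mem_varFree_iff :
    z ∈ varFree R F s ↔ ∃ a ∈ supported R {s}ᶜ, ∃ b ∈ supported R {s}ᶜ,
      algebraMap (MvPolynomial σ R) F a / algebraMap (MvPolynomial σ R) F b = z := by
  have closure_eq : Subring.closure (algebraMap (MvPolynomial σ R) F '' supported R {s}ᶜ) =
      (supported R {s}ᶜ).toSubring.map (algebraMap (MvPolynomial σ R) F) :=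
    Subring.closure_eq ((supported R {s}ᶜ).toSubring.map (algebraMap (MvPolynomial σ R) F))
  simp [varFree, Subfield.mem_closure_iff, closure_eq]

theorem algebraMap_X_mem_varFree [Nontrivial R] (hts : t ≠ s) :
    algebraMap (MvPolynomial σ R) F (X t) ∈ varFree R F s :=
  Subfield.subset_closure ⟨_, X_mem_supported.2 hts, rfl⟩

variable [IsFractionRing (MvPolynomial σ R) F]

variable (R F) in
/-- The extension of `translateVar` to the field of rational functions. -/
noncomputable def translateVarField (s : σ) : F ≃+* F :=
  IsFractionRing.ringEquivOfRingEquiv (translateVar R s).toRingEquiv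

theorem translateVarField_algebraMap_X_self :
    translateVarField R F s (algebraMap (MvPolynomial σ R) F (X s)) =
      algebraMap (MvPolynomial σ R) F (X s) + 1 := by
  rw [translateVarField, IsFractionRing.ringEquivOfRingEquiv_algebraMap,
    AlgEquiv.coe_ringEquiv, translateVar_X_self, map_add, map_one]

theorem translateVarField_eq_self (hz : z ∈ varFree R F s) : translateVarField R F s z = z := by
  obtain ⟨a, ha, b, hb, rfl⟩ := mem_varFree_iff.1 hz
  simp [translateVarField, translateVar_eq_self ha, translateVar_eq_self hb]

variable [IsDomain R] [UniqueFactorizationMonoid R] {p : MvPolynomial σ R}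

theorem mem_supported_of_primeValuation_lt_one (hp : Prime p) (hz : z ∈ varFree R F s)
    (hz0 : z ≠ 0) (hpz : primeValuation F hp z < 1) : p ∈ supported R {s}ᶜ := by
  obtain ⟨a, ha, b, _, rfl⟩ := mem_varFree_iff.1 hz
  refine mem_supported_of_dvd ha ?_ ((primeValuation_algebraMap_lt_one_iff (F := F) hp).1 ?_)
  · rintro rfl
    simp at hz0
  · have hb0 : algebraMap (MvPolynomial σ R) F b ≠ 0 := (div_ne_zero_iff.1 hz0).2
    rw [← div_mul_cancel₀ (algebraMap (MvPolynomial σ R) F a) hb0, map_mul]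
    exact (mul_le_of_le_one_right' ((primeValuation_le_one_iff hp).2
      (algebraMap_mem_primeValuationSubring hp b))).trans_lt hpz

theorem primeValuation_translateVarField_lt_one (hp : Prime p) (hps : p ∈ supported R {s}ᶜ)
    (hz : primeValuation F hp z < 1) : primeValuation F hp (translateVarField R F s z) < 1 :=
  primeValuation_ringEquivOfRingEquiv_lt_one hp (translateVar_eq_self hps) hz

theorem primeValuation_lt_one_or_of_translateVarField_sub {g u w : F} {n : ℕ} (hp : Prime p)
    (hps : p ∈ supported R {s}ᶜ) (hz : primeValuation F hp z < 1) (hw : w ≠ 0)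
    (hw_le : primeValuation F hp w ≤ 1) (h : translateVarField R F s z - z = g ^ n * u / w) :
    primeValuation F hp g < 1 ∨ primeValuation F hp u < 1 := by
  by_contra! hgu
  have moved_lt : primeValuation F hp (g ^ n * u / w) < 1 :=
    h ▸ Valuation.map_sub_lt _ (primeValuation_translateVarField_lt_one hp hps hz) hz
  have hw_pos : 0 < primeValuation F hp w := (Valuation.pos_iff _).2 hw
  rw [map_div₀, map_mul, map_pow, div_lt_one₀ hw_pos] at moved_lt
  exact moved_lt.not_ge (hw_le.trans (one_le_mul (one_le_pow_of_one_le' hgu.1 n) hgu.2))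

end FractionField

end FreeVariable

section Solution

variable {K : Type*} [Field K]

/-- The solution of the cube recurrence with initial entries `x`. -/
def cubeSolution (α β γ : K) (x : CubeInit → K) : ℕ → ℕ → ℕ → K
  | 0, j, k => x ⟨(0, j, k), .inl rfl⟩
  | i + 1, 0, k => x ⟨(i + 1, 0, k), .inr (.inl rfl)⟩
  | i + 1, j + 1, 0 => x ⟨(i + 1, j + 1, 0), .inr (.inr rfl)⟩
  | i + 1, j + 1, k + 1 =>
      (α * cubeSolution α β γ x i (j + 1) (k + 1) * cubeSolution α β γ x (i + 1) j k
        + β * cubeSolution α β γ x (i + 1) j (k + 1) * cubeSolution α β γ x i (j + 1) k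
        + γ * cubeSolution α β γ x (i + 1) (j + 1) k * cubeSolution α β γ x i j (k + 1)) /
        cubeSolution α β γ x i j k

theorem cubeRecurrence_cubeSolution (α β γ : K) (x : CubeInit → K) :
    CubeRecurrence α β γ (cubeSolution α β γ x) := fun i j k => by
  rw [cubeSolution]

theorem cubeSolution_init (α β γ : K) (x : CubeInit → K) (i j k : ℕ) (h : i = 0 ∨ j = 0 ∨ k = 0) :
    cubeSolution α β γ x i j k = x ⟨(i, j, k), h⟩ := by
  obtain rfl | rfl | rfl := h
  · rw [cubeSolution]
  · cases i <;> rw [cubeSolution]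
  · cases i <;> cases j <;> rw [cubeSolution]

end Solution

section Generic

variable (F : Type*) [Field F] [Algebra (MvPolynomial (CubeInit ⊕ Fin 3) ℤ) F]

/-- The indeterminate initial entry with index `s`. -/
noncomputable abbrev initVar (s : CubeInit) : F :=
  algebraMap (MvPolynomial (CubeInit ⊕ Fin 3) ℤ) F (X (Sum.inl s))

/-- The indeterminate parameters: `α` is `param F 0`, `β` is `param F 1` and `γ` is `param F 2`. -/
noncomputable abbrev param (n : Fin 3) : F :=
  algebraMap (MvPolynomial (CubeInit ⊕ Fin 3) ℤ) F (X (Sum.inr n))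

variable {F}

/-- The solution of the cube recurrence whose parameters and initial entries are indeterminates. -/
structure IsGenericCube (y : ℕ → ℕ → ℕ → F) : Prop where
  recurrence : CubeRecurrence (param F 0) (param F 1) (param F 2) y
  init : ∀ i j k, ∀ h : i = 0 ∨ j = 0 ∨ k = 0, y i j k = initVar F ⟨(i, j, k), h⟩

variable [IsFractionRing (MvPolynomial (CubeInit ⊕ Fin 3) ℤ) F]

theorem algebraMap_X_ne_zero (t : CubeInit ⊕ Fin 3) :
    algebraMap (MvPolynomial (CubeInit ⊕ Fin 3) ℤ) F (X t) ≠ 0 :=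
  (map_ne_zero_iff _ (IsFractionRing.injective _ F)).2 (X_ne_zero t)

variable (F) in
/-- The automorphism of the field of rational functions which adds `1` to the initial entry `s`. -/
noncomputable abbrev translateInit (s : CubeInit) : F ≃+* F :=
  translateVarField ℤ F (Sum.inl s : CubeInit ⊕ Fin 3)

theorem translateInit_param (s : CubeInit) (n : Fin 3) :
    translateInit F s (param F n) = param F n :=
  translateVarField_eq_self (algebraMap_X_mem_varFree Sum.inr_ne_inl)

namespace IsGenericCube

variable {y : ℕ → ℕ → ℕ → F} (hy : IsGenericCube y)
include hy

theorem init_ne_zero {i j k : ℕ} (h : i = 0 ∨ j = 0 ∨ k = 0) : y i j k ≠ 0 := by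
  rw [hy.init i j k h]
  exact algebraMap_X_ne_zero _

omit [IsFractionRing (MvPolynomial (CubeInit ⊕ Fin 3) ℤ) F] in
theorem mem_varFree {s : CubeInit} {i j k : ℕ}
    (h : ¬ (s.1.1 ≤ i ∧ s.1.2.1 ≤ j ∧ s.1.2.2 ≤ k)) :
    y i j k ∈ varFree ℤ F (Sum.inl s : CubeInit ⊕ Fin 3) := by
  refine hy.recurrence.mem_subfield (algebraMap_X_mem_varFree Sum.inr_ne_inl)
    (algebraMap_X_mem_varFree Sum.inr_ne_inl) (algebraMap_X_mem_varFree Sum.inr_ne_inl) i j k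
    fun a b c habc ha hb hc => ?_
  rw [hy.init a b c habc]
  refine algebraMap_X_mem_varFree ?_
  rintro ⟨⟩
  exact h ⟨ha, hb, hc⟩

theorem translateInit_eq_self {s : CubeInit} {i j k : ℕ}
    (h : ¬ (s.1.1 ≤ i ∧ s.1.2.1 ≤ j ∧ s.1.2.2 ≤ k)) : translateInit F s (y i j k) = y i j k :=
  translateVarField_eq_self (hy.mem_varFree h)

theorem translateInit_init {i j k : ℕ} (h : i = 0 ∨ j = 0 ∨ k = 0) :
    translateInit F ⟨(i, j, k), h⟩ (y i j k) = y i j k + 1 := by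
  rw [hy.init i j k h, translateVarField_algebraMap_X_self]

theorem translateInit_sub_self_fst {i j : ℕ} (hne : ∀ k, y i j k ≠ 0) (k : ℕ) :
    translateInit F ⟨(i + 1, j + 1, 0), .inr (.inr rfl)⟩ (y (i + 1) (j + 1) k) -
      y (i + 1) (j + 1) k = param F 2 ^ k * y i j k / y i j 0 := by
  have propagated := hy.recurrence.map_sub_self_eq hne
    (translateInit F ⟨(i + 1, j + 1, 0), .inr (.inr rfl)⟩ : F →+* F)
    (translateInit_param _ _) (translateInit_param _ _) (translateInit_param _ _)
    (fun a b => hy.translateInit_eq_self (by simp)) (fun b => hy.translateInit_eq_self (by simp)) k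
  simpa only [RingHom.coe_coe, hy.translateInit_init, add_sub_cancel_left, mul_one] using propagated

theorem translateInit_sub_self_snd {i k : ℕ} (hne : ∀ j, y i j k ≠ 0) (j : ℕ) :
    translateInit F ⟨(i + 1, 0, k + 1), .inr (.inl rfl)⟩ (y (i + 1) j (k + 1)) -
      y (i + 1) j (k + 1) = param F 1 ^ j * y i j k / y i 0 k := by
  have propagated := hy.recurrence.swap.map_sub_self_eq hne
    (translateInit F ⟨(i + 1, 0, k + 1), .inr (.inl rfl)⟩ : F →+* F)
    (translateInit_param _ _) (translateInit_param _ _) (translateInit_param _ _)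
    (fun a b => hy.translateInit_eq_self (by simp)) (fun b => hy.translateInit_eq_self (by simp)) j
  simpa only [RingHom.coe_coe, hy.translateInit_init, add_sub_cancel_left, mul_one] using propagated

theorem ne_zero (i j k : ℕ) : y i j k ≠ 0 := by
  induction i generalizing j k with
  | zero => exact hy.init_ne_zero (.inl rfl)
  | succ i ih =>
    cases j with
    | zero => exact hy.init_ne_zero (.inr (.inl rfl))
    | succ j =>
      intro h0
      have moved := hy.translateInit_sub_self_fst (ih j) k
      rw [h0, map_zero, sub_self, eq_comm] at moved
      exact div_ne_zero (mul_ne_zero (pow_ne_zero k (algebraMap_X_ne_zero (.inr 2))) (ih j k))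
        (ih j 0) moved

end IsGenericCube

section Prime

variable {p : MvPolynomial (CubeInit ⊕ Fin 3) ℤ} (hp : Prime p)

theorem eq_of_primeValuation_param_lt_one {m n : Fin 3} (hm : primeValuation F hp (param F m) < 1)
    (hn : primeValuation F hp (param F n) < 1) : m = n := by
  rw [primeValuation_algebraMap_lt_one_iff] at hm hn
  have hXX := ((hp.dvd_prime_iff_associated X_prime).1 hm).symm.dvd.trans hn
  simpa [X_dvd_X] using hXX

theorem mem_supported_of_primeValuation_param_lt_one {n : Fin 3} (s : CubeInit)
    (hn : primeValuation F hp (param F n) < 1) :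
    p ∈ supported ℤ {(Sum.inl s : CubeInit ⊕ Fin 3)}ᶜ :=
  mem_supported_of_primeValuation_lt_one hp (algebraMap_X_mem_varFree Sum.inr_ne_inl)
    (algebraMap_X_ne_zero _) hn

namespace IsGenericCube

variable {y : ℕ → ℕ → ℕ → F} (hy : IsGenericCube y)
  (hpX : ∀ s : CubeInit, ¬ p ∣ X (Sum.inl s))
include hy

theorem mem_supported_of_primeValuation_lt_one {s : CubeInit} {i j k : ℕ}
    (hs : ¬ (s.1.1 ≤ i ∧ s.1.2.1 ≤ j ∧ s.1.2.2 ≤ k)) (h : primeValuation F hp (y i j k) < 1) :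
    p ∈ supported ℤ {(Sum.inl s : CubeInit ⊕ Fin 3)}ᶜ :=
  _root_.mem_supported_of_primeValuation_lt_one hp (hy.mem_varFree hs) (hy.ne_zero i j k) h

include hpX

theorem primeValuation_init {i j k : ℕ} (h : i = 0 ∨ j = 0 ∨ k = 0) :
    primeValuation F hp (y i j k) = 1 := by
  rw [hy.init i j k h]
  exact primeValuation_algebraMap_eq_one hp (hpX _)

theorem hasUnitInitialData : HasUnitInitialData (primeValuationSubring F hp).toSubring
    (param F 0) (param F 1) (param F 2) y where
  α_mem := algebraMap_mem_primeValuationSubring hp _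
  β_mem := algebraMap_mem_primeValuationSubring hp _
  γ_mem := algebraMap_mem_primeValuationSubring hp _
  init_mem h := (primeValuation_le_one_iff hp).1 (hy.primeValuation_init hp hpX h).le
  init_inv_mem h := (primeValuation_le_one_iff hp).1 (by
    rw [map_inv₀, hy.primeValuation_init hp hpX h, inv_one])

theorem primeValuation_layer_one_le (j k : ℕ) : primeValuation F hp (y 1 j k) ≤ 1 :=
  (primeValuation_le_one_iff hp).2
    (hy.recurrence.layer_one_mem (hy.hasUnitInitialData hp hpX) j k)

theorem primeValuation_γ_lt_one {j k : ℕ}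
    (hps : p ∈ supported ℤ {(Sum.inl ⟨(1, j + 1, 0), .inr (.inr rfl)⟩ : CubeInit ⊕ Fin 3)}ᶜ)
    (h : primeValuation F hp (y 1 (j + 1) k) < 1) : primeValuation F hp (param F 2) < 1 :=
  (primeValuation_lt_one_or_of_translateVarField_sub hp hps h (hy.ne_zero 0 j 0)
    (hy.primeValuation_init hp hpX (.inl rfl)).le
    (hy.translateInit_sub_self_fst (hy.ne_zero 0 j) k)).resolve_right
    (hy.primeValuation_init hp hpX (.inl rfl)).not_lt

theorem primeValuation_β_lt_one {j k : ℕ}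
    (hps : p ∈ supported ℤ {(Sum.inl ⟨(1, 0, k + 1), .inr (.inl rfl)⟩ : CubeInit ⊕ Fin 3)}ᶜ)
    (h : primeValuation F hp (y 1 j (k + 1)) < 1) : primeValuation F hp (param F 1) < 1 :=
  (primeValuation_lt_one_or_of_translateVarField_sub hp hps h (hy.ne_zero 0 0 k)
    (hy.primeValuation_init hp hpX (.inl rfl)).le
    (hy.translateInit_sub_self_snd (hy.ne_zero 0 · k) j)).resolve_right
    (hy.primeValuation_init hp hpX (.inl rfl)).not_lt

theorem one_le_primeValuation_γ {j k : ℕ} (h : primeValuation F hp (y 1 j k) < 1) :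
    1 ≤ primeValuation F hp (param F 2) := by
  by_contra! hγ
  cases k with
  | zero => exact h.ne (hy.primeValuation_init hp hpX (.inr (.inr rfl)))
  | succ k =>
    have hβ := hy.primeValuation_β_lt_one hp hpX
      (mem_supported_of_primeValuation_param_lt_one hp _ hγ) h
    exact absurd (eq_of_primeValuation_param_lt_one hp hβ hγ) (by decide)

theorem one_le_primeValuation_β {j k : ℕ} (h : primeValuation F hp (y 1 j k) < 1) :
    1 ≤ primeValuation F hp (param F 1) := by
  by_contra! hβ
  cases j with
  | zero => exact h.ne (hy.primeValuation_init hp hpX (.inr (.inl rfl)))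
  | succ j =>
    have hγ := hy.primeValuation_γ_lt_one hp hpX
      (mem_supported_of_primeValuation_param_lt_one hp _ hβ) h
    exact absurd (eq_of_primeValuation_param_lt_one hp hβ hγ) (by decide)

theorem one_le_primeValuation_layer_one_of_adjacent {j k : ℕ}
    (h : primeValuation F hp (y 1 j (k + 1)) < 1) : 1 ≤ primeValuation F hp (y 1 (j + 1) k) := by
  by_contra! h'
  exact (hy.one_le_primeValuation_γ hp hpX h).not_gt (hy.primeValuation_γ_lt_one hp hpX
    (hy.mem_supported_of_primeValuation_lt_one hp (by simp) h) h')

theorem one_le_primeValuation_layer_two {j k : ℕ} (h : primeValuation F hp (y 1 j k) < 1)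
    (a b : ℕ) : 1 ≤ primeValuation F hp (y 2 a b) := by
  by_contra! h'
  obtain _ | a := a
  · exact h'.ne (hy.primeValuation_init hp hpX (.inr (.inl rfl)))
  obtain _ | b := b
  · exact h'.ne (hy.primeValuation_init hp hpX (.inr (.inr rfl)))
  have free (a b : ℕ) (hab : 2 = 0 ∨ a = 0 ∨ b = 0) :
      p ∈ supported ℤ {(Sum.inl ⟨(2, a, b), hab⟩ : CubeInit ⊕ Fin 3)}ᶜ :=
    hy.mem_supported_of_primeValuation_lt_one hp (by simp) h
  have le_one := hy.primeValuation_layer_one_le hp hpX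
  have h_fst : primeValuation F hp (y 1 a (b + 1)) < 1 :=
    (primeValuation_lt_one_or_of_translateVarField_sub hp (free _ _ _) h' (hy.ne_zero 1 a 0)
      (le_one a 0) (hy.translateInit_sub_self_fst (hy.ne_zero 1 a) (b + 1))).resolve_left
      (hy.one_le_primeValuation_γ hp hpX h).not_gt
  have h_snd : primeValuation F hp (y 1 (a + 1) b) < 1 :=
    (primeValuation_lt_one_or_of_translateVarField_sub hp (free _ _ _) h' (hy.ne_zero 1 0 b)
      (le_one 0 b) (hy.translateInit_sub_self_snd (hy.ne_zero 1 · b) (a + 1))).resolve_left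
      (hy.one_le_primeValuation_β hp hpX h).not_gt
  exact (hy.one_le_primeValuation_layer_one_of_adjacent hp hpX h_fst).not_gt h_snd

end IsGenericCube
end Prime

section Laurent

/-- The monomials in the initial entries. -/
noncomputable def initMonoid : Submonoid (MvPolynomial (CubeInit ⊕ Fin 3) ℤ) :=
  Submonoid.closure (Set.range fun s : CubeInit => X (Sum.inl s))

theorem X_mem_initMonoid (s : CubeInit) : X (Sum.inl s) ∈ initMonoid :=
  Submonoid.subset_closure ⟨s, rfl⟩

theorem initMonoid_le_nonZeroDivisors :
    initMonoid ≤ nonZeroDivisors (MvPolynomial (CubeInit ⊕ Fin 3) ℤ) := by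
  rw [initMonoid, Submonoid.closure_le]
  rintro _ ⟨s, rfl⟩
  exact mem_nonZeroDivisors_of_ne_zero (X_ne_zero _)

variable (F) in
/-- The ring of Laurent polynomials in the initial entries over `ℤ[α, β, γ]`, inside the field of
rational functions. -/
noncomputable def laurentRing : Subalgebra (MvPolynomial (CubeInit ⊕ Fin 3) ℤ) F :=
  Localization.subalgebra.ofField F initMonoid initMonoid_le_nonZeroDivisors

instance : IsLocalization initMonoid (laurentRing F) :=
  Localization.subalgebra.isLocalization_ofField F initMonoid initMonoid_le_nonZeroDivisors

variable {K : Type*} [Field K] {α β γ : K} {w : ℕ → ℕ → ℕ → K}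
  {O : Subring K} {y : ℕ → ℕ → ℕ → F} {n : ℕ}

/-- The values which the initial entries and the parameters of a solution `w` give to the
indeterminates. -/
def cubeValues (α β γ : K) (w : ℕ → ℕ → ℕ → K) : CubeInit ⊕ Fin 3 → K :=
  Sum.elim (fun s => w s.1.1 s.1.2.1 s.1.2.2) ![α, β, γ]

theorem HasUnitInitialData.cubeValues_mem (hO : HasUnitInitialData O α β γ w)
    (s : CubeInit ⊕ Fin 3) : cubeValues α β γ w s ∈ O := by
  rcases s with s | m
  · exact hO.init_mem s.2
  · fin_cases m
    exacts [hO.α_mem, hO.β_mem, hO.γ_mem]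

theorem HasUnitInitialData.exists_hom (hO : HasUnitInitialData O α β γ w)
    (hne : ∀ i j k, w i j k ≠ 0) :
    ∃ φ : laurentRing F →+* O, ∀ s,
      φ (algebraMap (MvPolynomial (CubeInit ⊕ Fin 3) ℤ) _ (X s)) = cubeValues α β γ w s := by
  let f : MvPolynomial (CubeInit ⊕ Fin 3) ℤ →+* O :=
    eval₂Hom (Int.castRingHom O) fun s => ⟨cubeValues α β γ w s, hO.cubeValues_mem s⟩
  have isUnit_f (m : initMonoid) : IsUnit (f m) := by
    suffices initMonoid ≤ (IsUnit.submonoid O).comap f from this m.2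
    rw [initMonoid, Submonoid.closure_le]
    rintro _ ⟨s, rfl⟩
    exact IsUnit.of_mul_eq_one ⟨_, hO.init_inv_mem s.2⟩
      (Subtype.ext (by simp [f, cubeValues, hne]))
  exact ⟨IsLocalization.lift isUnit_f, fun s => by simp [f]⟩

theorem IsGenericCube.map_eq (hy : IsGenericCube y) (hw : CubeRecurrence α β γ w)
    (hne : ∀ i j k, w i j k ≠ 0) {φ : laurentRing F →+* K}
    (hφ : ∀ s, φ (algebraMap (MvPolynomial (CubeInit ⊕ Fin 3) ℤ) _ (X s)) = cubeValues α β γ w s)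
    (hn : ∀ i ≤ n, ∀ j k, y i j k ∈ laurentRing F) (i j k : ℕ) (hi : i ≤ n) :
    φ ⟨y i j k, hn i hi j k⟩ = w i j k := by
  induction i, j, k using octant_induction with
  | boundary i j k hijk =>
    rw [show w i j k = cubeValues α β γ w (.inl ⟨(i, j, k), hijk⟩) from rfl, ← hφ]
    exact congrArg φ (Subtype.ext (hy.init i j k hijk))
  | step i j k h₁ h₂ h₃ h₄ h₅ h₆ h₇ =>
    have hi' : i ≤ n := i.le_succ.trans hi
    let param' (m : Fin 3) : laurentRing F :=
      algebraMap (MvPolynomial (CubeInit ⊕ Fin 3) ℤ) _ (X (.inr m))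
    let y' (i j k : ℕ) (hi : i ≤ n) : laurentRing F := ⟨y i j k, hn i hi j k⟩
    have recurrence : y' (i + 1) (j + 1) (k + 1) hi * y' i j k hi' =
        param' 0 * y' i (j + 1) (k + 1) hi' * y' (i + 1) j k hi
          + param' 1 * y' (i + 1) j (k + 1) hi * y' i (j + 1) k hi'
          + param' 2 * y' (i + 1) (j + 1) k hi * y' i j (k + 1) hi' :=
      Subtype.ext (hy.recurrence.mul_eq (hy.ne_zero i j k))
    replace recurrence := congrArg φ recurrence
    simp only [map_add, map_mul, param', y', hφ, h₁ hi', h₂ hi, h₃ hi, h₄ hi', h₅ hi, h₆ hi',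
      h₇ hi'] at recurrence
    exact mul_right_cancel₀ (hne i j k) (recurrence.trans (hw.mul_eq (hne i j k)).symm)

theorem IsGenericCube.mem_of_mem_laurentRing (hy : IsGenericCube y)
    (hw : CubeRecurrence α β γ w) (hne : ∀ i j k, w i j k ≠ 0)
    (hO : HasUnitInitialData O α β γ w)
    (hn : ∀ i ≤ n, ∀ j k, y i j k ∈ laurentRing F) (j k : ℕ) : w n j k ∈ O := by
  obtain ⟨φ, hφ⟩ := hO.exists_hom hne (F := F)
  rw [← hy.map_eq hw hne (φ := O.subtype.comp φ) hφ hn n j k le_rfl]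
  exact (φ _).2

theorem IsGenericCube.mem_primeValuationSubring (hy : IsGenericCube y)
    {p : MvPolynomial (CubeInit ⊕ Fin 3) ℤ} (hp : Prime p)
    (hpX : ∀ s : CubeInit, ¬ p ∣ X (Sum.inl s))
    (hn : ∀ i < n, ∀ j k, y i j k ∈ laurentRing F) (j k : ℕ) :
    y n j k ∈ primeValuationSubring F hp := by
  have hO := hy.hasUnitInitialData hp hpX
  have inv_mem {z : F} (hz : 1 ≤ primeValuation F hp z) : z⁻¹ ∈ primeValuationSubring F hp :=
    (primeValuation_le_one_iff hp).1 (map_inv₀ (primeValuation F hp) z ▸ inv_le_one_of_one_le₀ hz)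
  have mem_shift (m l : ℕ) (hl : ∀ i ≤ l, ∀ j k, y i j k ∈ laurentRing F)
      (hm : ∀ a b, y m a b ∈ primeValuationSubring F hp)
      (hm_unit : ∀ a b, 1 ≤ primeValuation F hp (y m a b)) :
      y (l + m) j k ∈ primeValuationSubring F hp :=
    hy.mem_of_mem_laurentRing (hy.recurrence.shift m) (fun i => hy.ne_zero (i + m))
      (hO.shift fun a b => ⟨hm a b, inv_mem (hm_unit a b)⟩) hl j k
  match n with
  | 0 => exact hO.init_mem (.inl rfl)
  | 1 => exact hy.recurrence.layer_one_mem hO j k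
  | n + 2 =>
    by_cases! hunit : ∀ a b, 1 ≤ primeValuation F hp (y 1 a b)
    · exact mem_shift 1 (n + 1) (fun i hi => hn i (by omega)) (hy.recurrence.layer_one_mem hO) hunit
    · obtain ⟨a, b, hab⟩ := hunit
      have hγ_inv := inv_mem (hy.one_le_primeValuation_γ hp hpX hab)
      exact mem_shift 2 n (fun i hi => hn i (by omega))
        (hy.recurrence.layer_two_mem hy.ne_zero hO (algebraMap_X_ne_zero _) hγ_inv)
        (hy.one_le_primeValuation_layer_two hp hpX hab)

theorem IsGenericCube.mem_laurentRing (hy : IsGenericCube y) (i j k : ℕ) :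
    y i j k ∈ laurentRing F := by
  induction i using Nat.strong_induction_on generalizing j k with
  | _ i ih =>
    exact mem_ofField_of_forall_prime _ fun p hp hpM =>
      hy.mem_primeValuationSubring hp (fun s => hpM _ (X_mem_initMonoid s)) ih j k

end Laurent

end Generic

theorem cube_recurrence_laurent_general {K : Type*} [Field K] {α β γ : K} {x : CubeInit → K}
    {y : ℕ → ℕ → ℕ → K}
    (hinit : ∀ i j k, ∀ h : i = 0 ∨ j = 0 ∨ k = 0, y i j k = x ⟨(i, j, k), h⟩)
    (hrec : CubeRecurrence α β γ y) (hne : ∀ i j k, y i j k ≠ 0) (i j k : ℕ) :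
    y i j k ∈ Algebra.adjoin ℤ
      (Set.range x ∪ Set.range (fun s => (x s)⁻¹) ∪ {α, β, γ}) := by
  let generators := Set.range x ∪ Set.range (fun s => (x s)⁻¹) ∪ {α, β, γ}
  have hO : HasUnitInitialData (Algebra.adjoin ℤ generators).toSubring α β γ y :=
    { α_mem := Algebra.subset_adjoin (by simp [generators])
      β_mem := Algebra.subset_adjoin (by simp [generators])
      γ_mem := Algebra.subset_adjoin (by simp [generators])
      init_mem := fun {i j k} h => hinit i j k h ▸ Algebra.subset_adjoin (.inl (.inl ⟨_, rfl⟩))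
      init_inv_mem := fun {i j k} h =>
        hinit i j k h ▸ Algebra.subset_adjoin (.inl (.inr ⟨_, rfl⟩)) }
  let F := FractionRing (MvPolynomial (CubeInit ⊕ Fin 3) ℤ)
  have generic : IsGenericCube (cubeSolution (param F 0) (param F 1) (param F 2) (initVar F)) :=
    ⟨cubeRecurrence_cubeSolution _ _ _ _, cubeSolution_init _ _ _ _⟩
  exact generic.mem_of_mem_laurentRing hrec hne hO (fun i _ => generic.mem_laurentRing i) j k

/-- The cube recurrence on the octant ℤ≥0³ exhibits the Laurent phenomenon:
each entry is a Laurent polynomial over ℤ[α,β,γ] in the initial entries. -/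
theorem cube_recurrence_laurent
    (F : Type*) [Field F] [Algebra (MvPolynomial (CubeInit ⊕ Fin 3) ℤ) F]
    [IsFractionRing (MvPolynomial (CubeInit ⊕ Fin 3) ℤ) F]
    (x : CubeInit ⊕ Fin 3 → F)
    (hx : ∀ s, x s = algebraMap (MvPolynomial (CubeInit ⊕ Fin 3) ℤ) F (X s))
    (α β γ : F) (hα : α = x (Sum.inr 0)) (hβ : β = x (Sum.inr 1)) (hγ : γ = x (Sum.inr 2))
    (y : ℕ → ℕ → ℕ → F)
    (hinit : ∀ i j k : ℕ, ∀ h : i = 0 ∨ j = 0 ∨ k = 0,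
      y i j k = x (Sum.inl ⟨(i, j, k), h⟩))
    (hrec : ∀ i j k : ℕ,
      y (i + 1) (j + 1) (k + 1) =
        (α * y i (j + 1) (k + 1) * y (i + 1) j k
          + β * y (i + 1) j (k + 1) * y i (j + 1) k
          + γ * y (i + 1) (j + 1) k * y i j (k + 1)) / y i j k) :
    ∀ i j k : ℕ, y i j k ∈ Algebra.adjoin ℤ
      (Set.range (fun s : CubeInit => x (Sum.inl s)) ∪
       Set.range (fun s : CubeInit => (x (Sum.inl s))⁻¹) ∪ {α, β, γ}) := by
  have hy : IsGenericCube y :=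
    ⟨by rwa [param, param, param, ← hx, ← hx, ← hx, ← hα, ← hβ, ← hγ],
      fun i j k h => (hinit i j k h).trans (hx _)⟩
  exact cube_recurrence_laurent_general hinit hrec hy.ne_zero
end
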